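/- For every integer n ≥ 2, let 𝒢_n be the space of marked n-generated groups, identified with the set of normal subgroups of the free group F_n of rank n, topologized as a subspace of 2^{F_n} with the product topology. Let ℋ_n ⊆ 𝒢_n consist of the marked groups (G,X) such that G is non-elementary hyperbolic (hyperbolic and containing no cyclic subgroup of finite index) and has no non-trivial finite normal subgroup, and let ℋ̄_n be the closure of ℋ_n in 𝒢_n. Then ℋ̄_n contains 2^{ℵ₀} elements that are pairwise incomparable with respect to the relation (G,X) ≼_is (H,Y) defined by f_{G,X} ≼ f_{H,Y}. In particular, the set of ∼-equivalence classes of isoperimetric spectra of finitely generated groups has the cardinality of the continuum. -/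

import Mathlib

open Function

namespace IsoSpecPaper

variable {ι : Type*} {G : Type*} [Group G]

/-- The (reduced) length of an element of a free group. -/
noncomputable def wnorm (w : FreeGroup ι) : ℕ :=
  @FreeGroup.norm ι (Classical.decEq ι) w

/-- `triv φ k` : the set of words of length at most `k` in the generators
(and their inverses) representing the identity of `G` under the marking `φ`. -/
noncomputable def triv (φ : FreeGroup ι →* G) (k : ℕ) : Set (FreeGroup ι) :=
  {w | wnorm w ≤ k ∧ φ w = 1}

/-- `AreaLe R w l` : `w` is a product of `l` conjugates of elements of `R` or
their inverses in the free group. -/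
def AreaLe (R : Set (FreeGroup ι)) (w : FreeGroup ι) (l : ℕ) : Prop :=
  ∃ L : List (FreeGroup ι × FreeGroup ι), L.length = l ∧
    (∀ p ∈ L, p.2 ∈ R ∨ p.2⁻¹ ∈ R) ∧
    w = (L.map fun p => p.1⁻¹ * p.2 * p.1).prod

/-- The area of `w` with respect to the set of relators `R`. -/
noncomputable def area (R : Set (FreeGroup ι)) (w : FreeGroup ι) : ℕ :=
  sInf {l | AreaLe R w l}

/-- The isoperimetric spectrum of the marked group `(G, φ)`:
`isoSpec φ k m n = max { area_{S_m}(w) : w ∈ ⟪S_k⟫, ‖w‖ ≤ n }`. -/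
noncomputable def isoSpec (φ : FreeGroup ι →* G) (k m n : ℕ) : ℕ :=
  sSup (area (triv φ m) '' {w | w ∈ Subgroup.normalClosure (triv φ k) ∧ wnorm w ≤ n})

/-- The real-valued isoperimetric spectrum. -/
noncomputable def isoSpecR (φ : FreeGroup ι →* G) : ℕ → ℕ → ℕ → ℝ :=
  fun k m n => (isoSpec φ k m n : ℝ)

/-- The Dehn function of the presentation with relators `R`. -/
noncomputable def dehn (R : Set (FreeGroup ι)) (n : ℕ) : ℕ :=
  sSup (area R '' {w | w ∈ Subgroup.normalClosure R ∧ wnorm w ≤ n})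

/-- The quasi-order `f ≼ g` on functions of triples `(k,m,n)` of positive integers
with `m ≥ k`. -/
def SpecLE (f g : ℕ → ℕ → ℕ → ℝ) : Prop :=
  ∃ C : ℕ, 0 < C ∧ ∀ k m n : ℕ, 0 < k → 0 < m → 0 < n → C * k ≤ m →
    f k (C * m) n ≤ C * g (C * k) m (C * n) + C * (n : ℝ) / m + C

/-- Equivalence of isoperimetric functions: `f ∼ g`. -/
def SpecEquiv (f g : ℕ → ℕ → ℕ → ℝ) : Prop := SpecLE f g ∧ SpecLE g f

/-- The linear spectrum `(k,m,n) ↦ n/m`. -/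
noncomputable def linSpec : ℕ → ℕ → ℕ → ℝ := fun _ m n => (n : ℝ) / m

/-- The word length of `g ∈ G` with respect to the marking `φ`. -/
noncomputable def wlen (φ : FreeGroup ι →* G) (g : G) : ℕ :=
  sInf {n | ∃ w : FreeGroup ι, wnorm w = n ∧ φ w = g}

/-- The word metric on `G` with respect to the marking `φ`. -/
noncomputable def wdist (φ : FreeGroup ι →* G) (g h : G) : ℕ := wlen φ (g⁻¹ * h)

/-- Quasi-isometry of marked groups with respect to their word metrics. -/
noncomputable def QuasiIsometric {H : Type*} [Group H] {κ : Type*}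
    (φ : FreeGroup ι →* G) (ψ : FreeGroup κ →* H) : Prop :=
  ∃ L : ℝ, 0 ≤ L ∧ ∃ (α : G → H) (β : H → G),
    (∀ x y : G, (wdist ψ (α x) (α y) : ℝ) ≤ L * wdist φ x y + L) ∧
    (∀ u v : H, (wdist φ (β u) (β v) : ℝ) ≤ L * wdist ψ u v + L) ∧
    (∀ t : H, (wdist ψ (α (β t)) t : ℝ) ≤ L) ∧
    (∀ s : G, (wdist φ (β (α s)) s : ℝ) ≤ L)

/-- A (combinatorial) geodesic path of length `n` in the Cayley graph of `(G, φ)`: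
consecutive vertices are at distance at most `1` and the endpoints are at
distance exactly `n`. -/
noncomputable def IsGeodesic (φ : FreeGroup ι →* G) {n : ℕ} (p : Fin (n + 1) → G) : Prop :=
  (∀ i : Fin n, wdist φ (p i.castSucc) (p i.succ) ≤ 1) ∧
  wdist φ (p 0) (p (Fin.last n)) = n

/-- Every vertex of the path `p` lies within distance `δ` of the set `A`. -/
noncomputable def ThinAt (φ : FreeGroup ι →* G) (δ : ℝ) {n : ℕ}
    (p : Fin (n + 1) → G) (A : Set G) : Prop :=
  ∀ i, ∃ a ∈ A, (wdist φ (p i) a : ℝ) ≤ δ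

/-- The Cayley graph of `(G, φ)` is `δ`-hyperbolic: every geodesic triangle is `δ`-thin. -/
noncomputable def HypConst (φ : FreeGroup ι →* G) (δ : ℝ) : Prop :=
  ∀ (n₁ n₂ n₃ : ℕ) (p : Fin (n₁ + 1) → G) (q : Fin (n₂ + 1) → G) (r : Fin (n₃ + 1) → G),
    IsGeodesic φ p → IsGeodesic φ q → IsGeodesic φ r →
    p (Fin.last n₁) = q 0 → q (Fin.last n₂) = r 0 → r (Fin.last n₃) = p 0 →
    ThinAt φ δ p (Set.range q ∪ Set.range r) ∧
    ThinAt φ δ q (Set.range r ∪ Set.range p) ∧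
    ThinAt φ δ r (Set.range p ∪ Set.range q)

/-- The marked group `(G, φ)` is hyperbolic. -/
noncomputable def IsHyperbolic (φ : FreeGroup ι →* G) : Prop :=
  ∃ δ : ℝ, 0 ≤ δ ∧ HypConst φ δ

/-- `G` (marked by `φ`) is a limit (direct limit) of hyperbolic groups. -/
noncomputable def LimitOfHyperbolic (φ : FreeGroup ι →* G) : Prop :=
  Surjective φ ∧ ∃ R : ℕ → Set (FreeGroup ι),
    (∀ i j, i ≤ j → R i ⊆ R j) ∧
    φ.ker = Subgroup.normalClosure (⋃ i, R i) ∧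
    ∀ i, IsHyperbolic (QuotientGroup.mk' (Subgroup.normalClosure (R i)))

/-- `G` (marked by `φ`) is well-approximated by hyperbolic groups. -/
noncomputable def WellApproximated (φ : FreeGroup ι →* G) : Prop :=
  Surjective φ ∧ ∃ R : ℕ → Set (FreeGroup ι),
    (∀ i j, i ≤ j → R i ⊆ R j) ∧
    φ.ker = Subgroup.normalClosure (⋃ i, R i) ∧
    (∀ i, IsHyperbolic (QuotientGroup.mk' (Subgroup.normalClosure (R i)))) ∧
    ∃ C : ℕ, 0 < C ∧ ∀ i : ℕ, 0 < i →
      (∀ w : FreeGroup ι, wnorm w ≤ i → φ w = 1 →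
        w ∈ Subgroup.normalClosure (R i)) ∧
      HypConst (QuotientGroup.mk' (Subgroup.normalClosure (R i))) ((C * i : ℕ) : ℝ)

/-- The space `𝒢_n` of marked `n`-generated groups, identified with the set of normal
subgroups of the free group `F_n`. -/
def MarkedGroup (n : ℕ) : Type := {H : Subgroup (FreeGroup (Fin n)) // H.Normal}

/-- The characteristic function of a marked group, as an element of the Cantor space
`2^{F_n}`. -/
noncomputable def mgChi {n : ℕ} (H : MarkedGroup n) : FreeGroup (Fin n) → Bool :=
  fun w => @decide (w ∈ H.1) (Classical.propDecidable _)

/-- The topology on `𝒢_n` induced from the product topology on `2^{F_n}`. -/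
noncomputable instance (n : ℕ) : TopologicalSpace (MarkedGroup n) :=
  TopologicalSpace.induced mgChi inferInstance

/-- The isoperimetric spectrum of a marked group. -/
noncomputable def mgSpec {n : ℕ} (H : MarkedGroup n) : ℕ → ℕ → ℕ → ℝ :=
  letI := H.2
  isoSpecR (QuotientGroup.mk' H.1)

/-- The quasi-order `≼_is` on marked groups: comparison of isoperimetric spectra. -/
noncomputable def precIs {n : ℕ} (H₁ H₂ : MarkedGroup n) : Prop :=
  SpecLE (mgSpec H₁) (mgSpec H₂)

/-- The subset `ℋ_n ⊆ 𝒢_n` of non-elementary hyperbolic marked groups without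
non-trivial finite normal subgroups. -/
noncomputable def Hset (n : ℕ) : Set (MarkedGroup n) :=
  {H | letI := H.2
       IsHyperbolic (QuotientGroup.mk' H.1) ∧
       (¬ ∃ g : FreeGroup (Fin n) ⧸ H.1, (Subgroup.zpowers g).index ≠ 0) ∧
       (∀ K : Subgroup (FreeGroup (Fin n) ⧸ H.1), K.Normal →
          (K : Set (FreeGroup (Fin n) ⧸ H.1)).Finite → K = ⊥)}


end IsoSpecPaper

namespace IsoSpecPaper

section basic
variable {ι : Type*}

theorem wnorm_one : wnorm (1 : FreeGroup ι) = 0 := by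
  unfold wnorm; exact @FreeGroup.norm_one ι (Classical.decEq ι)

theorem wnorm_inv (x : FreeGroup ι) : wnorm x⁻¹ = wnorm x := by
  unfold wnorm; exact @FreeGroup.norm_inv_eq ι (Classical.decEq ι) x

theorem wnorm_mul_le (x y : FreeGroup ι) : wnorm (x * y) ≤ wnorm x + wnorm y := by
  unfold wnorm; exact @FreeGroup.norm_mul_le ι (Classical.decEq ι) x y

theorem wnorm_of (x : ι) : wnorm (FreeGroup.of x) = 1 := by
  unfold wnorm; exact @FreeGroup.norm_of ι (Classical.decEq ι) x

theorem wnorm_mk_le (L : List (ι × Bool)) : wnorm (FreeGroup.mk L) ≤ L.length := by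
  unfold wnorm; exact @FreeGroup.norm_mk_le ι L (Classical.decEq ι)

theorem wnorm_eq_zero {x : FreeGroup ι} : wnorm x = 0 ↔ x = 1 := by
  unfold wnorm; exact @FreeGroup.norm_eq_zero ι (Classical.decEq ι) x

/-- The reduced word of an element. -/
noncomputable def wd (x : FreeGroup ι) : List (ι × Bool) :=
  @FreeGroup.toWord ι (Classical.decEq ι) x

theorem wd_length (x : FreeGroup ι) : (wd x).length = wnorm x := rfl

theorem mk_wd (x : FreeGroup ι) : FreeGroup.mk (wd x) = x :=
  @FreeGroup.mk_toWord ι (Classical.decEq ι) x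

theorem hd_ne {x y : FreeGroup ι} (h : (wd x).head? ≠ (wd y).head?) :
    wnorm (x⁻¹ * y) = wnorm x + wnorm y := by
  classical
  have key : FreeGroup.IsReduced (FreeGroup.invRev (wd x) ++ wd y) := by
    have h1 : FreeGroup.IsReduced (wd x⁻¹) := @FreeGroup.isReduced_toWord ι (Classical.decEq ι) _
    have h2 : FreeGroup.IsReduced (wd y) := @FreeGroup.isReduced_toWord ι (Classical.decEq ι) _
    have h3 : wd x⁻¹ = FreeGroup.invRev (wd x) := @FreeGroup.toWord_inv ι (Classical.decEq ι) x
    rw [h3] at h1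
    unfold FreeGroup.IsReduced at *
    rw [List.isChain_append]
    refine ⟨h1, h2, ?_⟩
    intro a ha b hb
    have ha' : ∃ c, (wd x).head? = some c ∧ a = (c.1, !c.2) := by
      simp only [FreeGroup.invRev, List.getLast?_reverse, List.head?_map, Option.mem_def,
        Option.map_eq_some_iff] at ha
      obtain ⟨c, hc, rfl⟩ := ha
      exact ⟨c, hc, rfl⟩
    obtain ⟨c, hc, rfl⟩ := ha'
    intro h4
    simp only at h4
    rw [Option.mem_def] at hb
    rw [hc, hb] at h
    simp only
    by_contra h5
    apply h
    congr 1
    ext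
    · exact h4
    · cases hh : c.2 <;> cases hb2 : b.2 <;> simp_all
  have h6 : wd (x⁻¹ * y) = FreeGroup.invRev (wd x) ++ wd y := by
    have := @FreeGroup.IsReduced.reduce_eq ι _ (Classical.decEq ι) key
    rw [← this]
    have h7 := @FreeGroup.toWord_mul ι (Classical.decEq ι) x⁻¹ y
    rw [@FreeGroup.toWord_inv ι (Classical.decEq ι) x] at h7
    exact h7
  rw [← wd_length, h6]
  simp [wd_length]

theorem hd_eq {x y : FreeGroup ι} (h : (wd x).head? = (wd y).head?) (hx : x ≠ 1) :
    wnorm (x⁻¹ * y) + 2 ≤ wnorm x + wnorm y := by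
  have h1 := mk_wd x
  have h2 := mk_wd y
  cases hX : wd x with
  | nil => rw [hX] at h1; exact absurd h1.symm hx
  | cons a l =>
    cases hY : wd y with
    | nil => rw [hX, hY] at h; simp at h
    | cons b l' =>
      rw [hX, hY] at h
      simp at h
      subst h
      rw [hX] at h1; rw [hY] at h2
      have e1 : x = FreeGroup.mk [a] * FreeGroup.mk l := by rw [FreeGroup.mul_mk, ← h1]; rfl
      have e2 : y = FreeGroup.mk [a] * FreeGroup.mk l' := by rw [FreeGroup.mul_mk, ← h2]; rfl
      have e3 : x⁻¹ * y = (FreeGroup.mk l)⁻¹ * FreeGroup.mk l' := by rw [e1, e2]; group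
      have l1 : wnorm x = l.length + 1 := by rw [← wd_length, hX]; rfl
      have l2 : wnorm y = l'.length + 1 := by rw [← wd_length, hY]; rfl
      have := wnorm_mul_le (FreeGroup.mk l)⁻¹ (FreeGroup.mk l')
      rw [wnorm_inv] at this
      have := wnorm_mk_le l
      have := wnorm_mk_le l'
      rw [e3]; omega

end basic

section tree
variable {ι : Type*} {Q : Type*} [Group Q]

/-- A Lipschitz section of a marking, into the Cayley tree of the free group. -/
structure TS (φ : FreeGroup ι →* Q) (B : ℕ) (σ : Q → FreeGroup ι) : Prop where
  sec : ∀ g, φ (σ g) = g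
  lip : ∀ g w, wnorm w ≤ 1 → wnorm ((σ g)⁻¹ * σ (g * φ w)) ≤ B

variable {φ : FreeGroup ι →* Q} {B : ℕ} {σ : Q → FreeGroup ι}

theorem wlen_le (w : FreeGroup ι) : wlen φ (φ w) ≤ wnorm w :=
  Nat.sInf_le ⟨w, rfl, rfl⟩

theorem wlen_att (hs : Surjective φ) (g : Q) : ∃ w, wnorm w = wlen φ g ∧ φ w = g := by
  have : {n | ∃ w : FreeGroup ι, wnorm w = n ∧ φ w = g}.Nonempty := by
    obtain ⟨w, hw⟩ := hs g
    exact ⟨_, w, rfl, hw⟩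
  exact Nat.sInf_mem this

theorem TS.surj (h : TS φ B σ) : Surjective φ := fun g => ⟨σ g, h.sec g⟩

theorem wdist_tri (hs : Surjective φ) (a b c : Q) :
    wdist φ a c ≤ wdist φ a b + wdist φ b c := by
  obtain ⟨u, hu, hu'⟩ := wlen_att hs (a⁻¹ * b)
  obtain ⟨v, hv, hv'⟩ := wlen_att hs (b⁻¹ * c)
  have : a⁻¹ * c = φ (u * v) := by rw [map_mul, hu', hv']; group
  unfold wdist
  rw [← hu, ← hv, this]
  exact (wlen_le _).trans (wnorm_mul_le _ _)

theorem wdist_symm_le (hs : Surjective φ) (a b : Q) : wdist φ a b ≤ wdist φ b a := by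
  obtain ⟨u, hu, hu'⟩ := wlen_att hs (b⁻¹ * a)
  have : a⁻¹ * b = φ (u⁻¹) := by rw [map_inv, hu']; group
  unfold wdist
  rw [← hu, this, ← wnorm_inv u]
  exact wlen_le _

theorem wdist_comm' (hs : Surjective φ) (a b : Q) : wdist φ a b = wdist φ b a :=
  le_antisymm (wdist_symm_le hs a b) (wdist_symm_le hs b a)

theorem TS.step (h : TS φ B σ) {a b : Q} (hab : wdist φ a b ≤ 1) :
    wnorm ((σ a)⁻¹ * σ b) ≤ B := by
  obtain ⟨u, hu, hu'⟩ := wlen_att h.surj (a⁻¹ * b)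
  have := h.lip a u (by rw [hu]; exact hab)
  rwa [hu', mul_inv_cancel_left] at this

theorem TS.far (h : TS φ B σ) {a b : Q} (c : FreeGroup ι) (hab : wdist φ a b ≤ 1)
    (ha : B < wnorm (c⁻¹ * σ a)) :
    (wd (c⁻¹ * σ a)).head? = (wd (c⁻¹ * σ b)).head? := by
  by_contra hne
  have h1 := hd_ne hne
  have h2 := h.step hab
  have : (c⁻¹ * σ a)⁻¹ * (c⁻¹ * σ b) = (σ a)⁻¹ * σ b := by group
  rw [this] at h1
  omega

theorem TS.path (h : TS φ B σ) (c : FreeGroup ι) {n : ℕ} (p : Fin (n + 1) → Q)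
    (hp : ∀ i : Fin n, wdist φ (p i.castSucc) (p i.succ) ≤ 1)
    (hf : ∀ i, B < wnorm (c⁻¹ * σ (p i))) (i : Fin (n + 1)) :
    (wd (c⁻¹ * σ (p 0))).head? = (wd (c⁻¹ * σ (p i))).head? := by
  induction i using Fin.induction with
  | zero => rfl
  | succ i ih => rw [ih]; exact h.far c (hp i) (hf _)

theorem TS.near (h : TS φ B σ) {c : FreeGroup ι} {g : Q} (hc : wnorm (c⁻¹ * σ g) ≤ B) :
    wdist φ (φ c) g ≤ B := by
  have : (φ c)⁻¹ * g = φ (c⁻¹ * σ g) := by rw [map_mul, map_inv, h.sec]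
  unfold wdist
  rw [this]
  exact (wlen_le _).trans hc

theorem between_hd {c u v : FreeGroup ι} (hc : wnorm (c⁻¹ * u) + wnorm (c⁻¹ * v) ≤ wnorm (u⁻¹ * v))
    (hu : wnorm (c⁻¹ * u) ≠ 0) :
    (wd (c⁻¹ * u)).head? ≠ (wd (c⁻¹ * v)).head? := by
  intro he
  have := hd_eq he (fun h0 => hu (wnorm_eq_zero.2 h0))
  have e : (c⁻¹ * u)⁻¹ * (c⁻¹ * v) = u⁻¹ * v := by group
  rw [e] at this
  omega

/-- the points of the geodesic of the tree from `u` to `v` -/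
noncomputable def tgeo (u v : FreeGroup ι) (j : ℕ) : FreeGroup ι :=
  u * FreeGroup.mk ((wd (u⁻¹ * v)).take j)

theorem tgeo_zero (u v : FreeGroup ι) : tgeo u v 0 = u := by
  unfold tgeo; rw [List.take_zero]; exact mul_one u

theorem tgeo_last (u v : FreeGroup ι) : tgeo u v (wnorm (u⁻¹ * v)) = v := by
  unfold tgeo
  rw [← wd_length, List.take_length, mk_wd]; group

theorem tgeo_between (u v : FreeGroup ι) (j : ℕ) :
    wnorm ((tgeo u v j)⁻¹ * u) + wnorm ((tgeo u v j)⁻¹ * v) ≤ wnorm (u⁻¹ * v) := by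
  set l := wd (u⁻¹ * v) with hl
  have e0 : FreeGroup.mk (l.take j) * FreeGroup.mk (l.drop j) = u⁻¹ * v := by
    rw [FreeGroup.mul_mk, List.take_append_drop, hl, mk_wd]
  have e1 : (tgeo u v j)⁻¹ * u = (FreeGroup.mk (l.take j))⁻¹ := by
    unfold tgeo; rw [← hl]; group
  have e2 : (tgeo u v j)⁻¹ * v = FreeGroup.mk (l.drop j) := by
    unfold tgeo
    rw [← hl, mul_inv_rev, mul_assoc, ← e0, inv_mul_cancel_left]
  rw [e1, e2, wnorm_inv]
  have h1 := wnorm_mk_le (l.take j)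
  have h2 := wnorm_mk_le (l.drop j)
  rw [List.length_take] at h1
  rw [List.length_drop] at h2
  have : l.length = wnorm (u⁻¹ * v) := wd_length _
  omega

theorem tgeo_step (u v : FreeGroup ι) (j : ℕ) :
    wnorm ((tgeo u v j)⁻¹ * tgeo u v (j + 1)) ≤ 1 := by
  unfold tgeo
  set l := wd (u⁻¹ * v) with hl
  rw [List.take_add_one, ← FreeGroup.mul_mk]
  have : (u * FreeGroup.mk (l.take j))⁻¹ * (u * (FreeGroup.mk (l.take j) *
      FreeGroup.mk (l[j]?.toList))) = FreeGroup.mk (l[j]?.toList) := by group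
  rw [this]
  refine (wnorm_mk_le _).trans ?_
  cases l[j]? <;> simp

theorem geo_dist (hs : Surjective φ) {n : ℕ} {p : Fin (n + 1) → Q} (hp : IsGeodesic φ p)
    (i j : ℕ) (hij : i ≤ j) (hj : j ≤ n) :
    wdist φ (p ⟨i, by omega⟩) (p ⟨j, by omega⟩) ≤ j - i := by
  induction j, hij using Nat.le_induction with
  | base =>
    have := wlen_le (φ := φ) 1
    rw [wnorm_one] at this
    simpa [wdist] using this
  | succ j hij ih =>
    have h1 := ih (by omega)
    have h2 := hp.1 ⟨j, by omega⟩
    have h3 := wdist_tri hs (p ⟨i, by omega⟩) (p ⟨j, by omega⟩) (p ⟨j + 1, by omega⟩)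
    simp only [Fin.castSucc_mk, Fin.succ_mk] at h2
    omega

theorem geo_dist_ge (hs : Surjective φ) {n : ℕ} {p : Fin (n + 1) → Q} (hp : IsGeodesic φ p)
    (i j : ℕ) (hij : i ≤ j) (hj : j ≤ n) :
    j - i ≤ wdist φ (p ⟨i, by omega⟩) (p ⟨j, by omega⟩) := by
  have h1 := geo_dist hs hp 0 i (by omega) (by omega)
  have h2 := geo_dist hs hp j n (by omega) (by omega)
  have h3 := hp.2
  have h4 := wdist_tri hs (p 0) (p ⟨i, by omega⟩) (p (Fin.last n))
  have h5 := wdist_tri hs (p ⟨i, by omega⟩) (p ⟨j, by omega⟩) (p (Fin.last n))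
  have e1 : (p ⟨0, by omega⟩) = p 0 := rfl
  have e2 : (p ⟨n, by omega⟩) = p (Fin.last n) := rfl
  rw [e1] at h1
  rw [e2] at h2
  omega

/-- A path between the endpoints passes near each point of the tree geodesic. -/
theorem TS.bott (h : TS φ B σ) {n : ℕ} (p : Fin (n + 1) → Q)
    (hp : ∀ i : Fin n, wdist φ (p i.castSucc) (p i.succ) ≤ 1) (c : FreeGroup ι)
    (hc : wnorm (c⁻¹ * σ (p 0)) + wnorm (c⁻¹ * σ (p (Fin.last n))) ≤
      wnorm ((σ (p 0))⁻¹ * σ (p (Fin.last n)))) : ∃ i, wnorm (c⁻¹ * σ (p i)) ≤ B := by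
  by_contra! hcon
  exact between_hd hc (by have := hcon 0; omega) (h.path c p hp hcon _)

theorem TS.geo_near (h : TS φ B σ) {n : ℕ} {p : Fin (n + 1) → Q} (hp : IsGeodesic φ p)
    (i : Fin (n + 1)) : ∃ j, wdist φ (p i) (φ (tgeo (σ (p 0)) (σ (p (Fin.last n))) j)) ≤ 3 * B + 1 := by
  classical
  have hs := h.surj
  set c := tgeo (σ (p 0)) (σ (p (Fin.last n))) with hcdef
  set M := wnorm ((σ (p 0))⁻¹ * σ (p (Fin.last n))) with hM
  let P : ℕ → Prop := fun j => ∃ i' : Fin (n + 1), i' ≤ i ∧ wnorm ((c j)⁻¹ * σ (p i')) ≤ B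
  have hP0 : P 0 := ⟨0, Fin.zero_le _, by rw [hcdef, tgeo_zero]; simp [wnorm_one]⟩
  by_cases hall : ∀ j < M, P j → P (j + 1)
  · have hPM : ∀ j ≤ M, P j := by
      intro j
      induction j with
      | zero => intro _; exact hP0
      | succ j ih => intro hj; exact hall j (by omega) (ih (by omega))
    obtain ⟨i', hi', hd⟩ := hPM M le_rfl
    refine ⟨M, ?_⟩
    have hcM : c M = σ (p (Fin.last n)) := tgeo_last _ _
    have h1 := h.near hd
    rw [hcM, h.sec] at h1
    rw [hcM, h.sec]
    have h2 := geo_dist_ge hs hp i' n (by omega) le_rfl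
    have h3 := geo_dist hs hp i n (by omega) le_rfl
    have e2 : (p ⟨n, by omega⟩) = p (Fin.last n) := rfl
    rw [e2] at h2 h3
    simp only [Fin.eta] at h2 h3
    rw [wdist_comm' hs] at h1
    have : (i' : ℕ) ≤ i := hi'
    omega
  · push Not at hall
    obtain ⟨j, hj, ⟨i', hi', hd⟩, hn⟩ := hall
    obtain ⟨i'', hd''⟩ := h.bott p hp.1 (c (j + 1)) (tgeo_between _ _ _)
    have hi'' : i < i'' := by
      by_contra hh
      exact hn ⟨i'', not_lt.1 hh, hd''⟩
    refine ⟨j, ?_⟩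
    have h1 := h.near hd
    have h2 := h.near hd''
    have h3 : wdist φ (φ (c j)) (φ (c (j + 1))) ≤ 1 := by
      unfold wdist
      rw [← map_inv, ← map_mul]
      exact (wlen_le _).trans (tgeo_step _ _ _)
    have hi1 : (i' : ℕ) ≤ i := hi'
    have hi2 : (i : ℕ) < i'' := hi''
    have h4 := geo_dist_ge hs hp i' i'' (by omega) (by omega)
    have h5 := geo_dist hs hp i' i (by omega) (by omega)
    simp only [Fin.eta] at h4 h5
    have t1 := wdist_tri hs (p i') (φ (c j)) (p i'')
    have t2 := wdist_tri hs (φ (c j)) (φ (c (j + 1))) (p i'')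
    have t3 := wdist_tri hs (p i) (p i') (φ (c j))
    have s1 := wdist_comm' hs (p i') (φ (c j))
    have s2 := wdist_comm' hs (p i') (p i)
    omega

theorem TS.thin (h : TS φ B σ) {n₁ n₂ n₃ : ℕ} {p : Fin (n₁ + 1) → Q} {q : Fin (n₂ + 1) → Q}
    {r : Fin (n₃ + 1) → Q} (hp : IsGeodesic φ p) (hq : IsGeodesic φ q) (hr : IsGeodesic φ r)
    (h1 : p (Fin.last n₁) = q 0) (h2 : q (Fin.last n₂) = r 0) (h3 : r (Fin.last n₃) = p 0) :
    ThinAt φ ((4 * B + 1 : ℕ) : ℝ) p (Set.range q ∪ Set.range r) := by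
  intro i
  obtain ⟨j, hj⟩ := h.geo_near hp i
  set c := tgeo (σ (p 0)) (σ (p (Fin.last n₁))) j with hc
  have hb := tgeo_between (σ (p 0)) (σ (p (Fin.last n₁))) j
  rw [← hc] at hb
  have : (∃ k, wnorm (c⁻¹ * σ (q k)) ≤ B) ∨ (∃ k, wnorm (c⁻¹ * σ (r k)) ≤ B) := by
    by_contra! hcon
    obtain ⟨hcq, hcr⟩ := hcon
    have e1 := h.path c q hq.1 hcq (Fin.last _)
    have e2 := h.path c r hr.1 hcr (Fin.last _)
    rw [← h1, h2] at e1
    rw [h3] at e2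
    have := hcr (Fin.last _)
    rw [h3] at this
    exact between_hd hb (by omega) (e1.trans e2).symm
  have hs := h.surj
  rcases this with ⟨k, hk⟩ | ⟨k, hk⟩
  · refine ⟨q k, Or.inl ⟨k, rfl⟩, ?_⟩
    have := h.near hk
    have := wdist_tri hs (p i) (φ c) (q k)
    exact_mod_cast (by omega : wdist φ (p i) (q k) ≤ 4 * B + 1)
  · refine ⟨r k, Or.inr ⟨k, rfl⟩, ?_⟩
    have := h.near hk
    have := wdist_tri hs (p i) (φ c) (r k)
    exact_mod_cast (by omega : wdist φ (p i) (r k) ≤ 4 * B + 1)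

theorem TS.hyp (h : TS φ B σ) : IsHyperbolic φ := by
  refine ⟨((4 * B + 1 : ℕ) : ℝ), by positivity, ?_⟩
  intro n₁ n₂ n₃ p q r hp hq hr h1 h2 h3
  exact ⟨h.thin hp hq hr h1 h2 h3, h.thin hq hr hp h2 h3 h1, h.thin hr hp hq h3 h1 h2⟩

theorem AreaLe.append {R : Set (FreeGroup ι)} {u v : FreeGroup ι} {k l : ℕ}
    (hu : AreaLe R u k) (hv : AreaLe R v l) : AreaLe R (u * v) (k + l) := by
  obtain ⟨L, h1, h2, h3⟩ := hu
  obtain ⟨L', h1', h2', h3'⟩ := hv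
  refine ⟨L ++ L', by simp [h1, h1'], ?_, by simp [h3, h3']⟩
  intro p hp
  rcases List.mem_append.1 hp with hp | hp
  · exact h2 p hp
  · exact h2' p hp

theorem AreaLe.conj {R : Set (FreeGroup ι)} {u : FreeGroup ι} {k : ℕ}
    (hu : AreaLe R u k) (c : FreeGroup ι) : AreaLe R (c⁻¹ * u * c) k := by
  obtain ⟨L, h1, h2, h3⟩ := hu
  refine ⟨L.map (fun p => (p.1 * c, p.2)), by simp [h1], ?_, ?_⟩
  · intro p hp
    obtain ⟨q, hq, rfl⟩ := List.mem_map.1 hp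
    exact h2 q hq
  · rw [h3]
    clear h1 h2 h3
    induction L with
    | nil => simp
    | cons a L ih =>
      simp only [List.map_cons, List.prod_cons]
      rw [← ih]; group

theorem TS.area_aux (h : TS φ B σ) (L : List (ι × Bool)) (g : Q) :
    AreaLe {r | wnorm r ≤ B + 1 ∧ φ r = 1}
      (σ g * FreeGroup.mk L * (σ (g * φ (FreeGroup.mk L)))⁻¹) L.length := by
  induction L generalizing g with
  | nil =>
    refine ⟨[], rfl, by simp, ?_⟩
    have : FreeGroup.mk ([] : List (ι × Bool)) = 1 := rfl
    simp [this]
  | cons a L ih =>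
    have e : FreeGroup.mk (a :: L) = FreeGroup.mk [a] * FreeGroup.mk L := by
      rw [FreeGroup.mul_mk]; rfl
    have h1 := ih (g * φ (FreeGroup.mk [a]))
    have hx : wnorm (FreeGroup.mk [a]) ≤ 1 := wnorm_mk_le _
    have h2 : AreaLe {r | wnorm r ≤ B + 1 ∧ φ r = 1}
      (σ g * FreeGroup.mk [a] * (σ (g * φ (FreeGroup.mk [a])))⁻¹) 1 := by
      refine ⟨[((σ g)⁻¹, FreeGroup.mk [a] * (σ (g * φ (FreeGroup.mk [a])))⁻¹ * σ g)], rfl, ?_, ?_⟩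
      · intro p hp
        rw [List.mem_singleton] at hp
        subst hp
        left
        constructor
        · have h3 := h.lip g _ hx
          rw [← wnorm_inv] at h3
          have h4 := wnorm_mul_le (FreeGroup.mk [a]) (((σ g)⁻¹ * σ (g * φ (FreeGroup.mk [a])))⁻¹)
          simp only [mul_inv_rev, inv_inv] at h3 h4
          simp only [mul_assoc] at *
          omega
        · simp only [map_mul, map_inv, h.sec]; group
      · simp; group
    have h3 := h2.append h1
    rw [List.length_cons, add_comm L.length]
    convert h3 using 1
    rw [e, map_mul]; group

theorem TS.area (h : TS φ B σ) (w : FreeGroup ι) (hw : φ w = 1) :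
    AreaLe {r | wnorm r ≤ B + 1 ∧ φ r = 1} w (wnorm w) := by
  have h1 := h.area_aux (wd w) 1
  rw [mk_wd, hw, wd_length, one_mul] at h1
  have := h1.conj (σ 1)
  convert this using 1
  group

end tree
end IsoSpecPaper

namespace IsoSpecPaper

section hnn
open HNNExtension HNNExtension.NormalWord
variable {ι : Type*} {Q : Type*} [Group Q] {A B : Subgroup Q} {φ : A ≃* B}
  {d : TransversalPair Q A B}

/-- A lift of a normal word to the free group. -/
noncomputable def nwLift (lam : Q → FreeGroup ι) (τ : FreeGroup ι) (w : NormalWord d) : FreeGroup ι :=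
  lam w.head * (w.toList.map (fun x => τ ^ (x.1 : ℤ) * lam x.2)).prod

theorem map_nwLift (Φ : FreeGroup ι →* HNNExtension Q A B φ) (lam : Q → FreeGroup ι)
    (τ : FreeGroup ι) (hl : ∀ g, Φ (lam g) = of g) (hτ : Φ τ = t) (w : NormalWord d) :
    Φ (nwLift lam τ w) = w.prod φ := by
  unfold nwLift ReducedWord.prod
  rw [map_mul, hl, map_list_prod, List.map_map]
  congr 2
  apply List.map_congr_left
  intro x _
  simp [hl, hτ]

theorem nwLift_cons (lam : Q → FreeGroup ι) (τ : FreeGroup ι) (g : Q) (u : ℤˣ) (w : NormalWord d)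
    (h1 : w.head ∈ d.set u)
    (h2 : ∀ u' ∈ Option.map Prod.fst w.toList.head?, w.head ∈ toSubgroup A B u → u = u') :
    nwLift lam τ (cons g u w h1 h2) = lam g * (τ ^ (u : ℤ) * nwLift lam τ w) := by
  simp [nwLift, mul_assoc]

theorem nwLift_smul (lam : Q → FreeGroup ι) (τ : FreeGroup ι) (g : Q) (w : NormalWord d) :
    nwLift lam τ (g • w) = lam (g * w.head) * (lam w.head)⁻¹ * nwLift lam τ w := by
  simp [nwLift, mul_assoc]

theorem wnorm_zpow_unit (τ : FreeGroup ι) (u : ℤˣ) : wnorm (τ ^ (u : ℤ)) = wnorm τ := by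
  rcases Int.units_eq_one_or u with rfl | rfl
  · simp
  · simp [wnorm_inv]

theorem wnorm_mul3 (a b c : FreeGroup ι) : wnorm (a * b * c) ≤ wnorm a + wnorm b + wnorm c :=
  (wnorm_mul_le _ _).trans (Nat.add_le_add_right (wnorm_mul_le _ _) _)

theorem nwLift_smul_diff (lam : Q → FreeGroup ι) (τ : FreeGroup ι) (M : ℕ)
    (hM : ∀ g, wnorm (lam g) ≤ M) (g : Q) (w : NormalWord d) :
    wnorm (nwLift lam τ w * (nwLift lam τ (g • w))⁻¹) ≤ 2 * M := by
  rw [nwLift_smul]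
  have e : nwLift lam τ w * (lam (g * w.head) * (lam w.head)⁻¹ * nwLift lam τ w)⁻¹ =
    lam w.head * (lam (g * w.head))⁻¹ := by group
  rw [e]
  refine (wnorm_mul_le _ _).trans ?_
  rw [wnorm_inv]
  have := hM w.head
  have := hM (g * w.head)
  omega

theorem nwLift_units_diff (lam : Q → FreeGroup ι) (τ : FreeGroup ι) (M : ℕ)
    (hM : ∀ g, wnorm (lam g) ≤ M) (u : ℤˣ) (w : NormalWord d) :
    wnorm (nwLift lam τ w * (nwLift lam τ (unitsSMul φ u w))⁻¹) ≤ 3 * M + wnorm τ := by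
  classical
  rw [unitsSMul]
  split_ifs with hcan
  · cases w using consRecOn with
    | ofGroup => simp [Cancels] at hcan
    | cons g u' w h1 h2 ih =>
      simp only [unitsSMulWithCancel, consRecOn_cons]
      rw [nwLift_smul, nwLift_cons]
      set x : Q := (toSubgroupEquiv φ u ⟨g, hcan.1⟩ : Q)
      have e : lam g * (τ ^ (u' : ℤ) * nwLift lam τ w) * (lam (x * w.head) * (lam w.head)⁻¹ *
        nwLift lam τ w)⁻¹ = lam g * τ ^ (u' : ℤ) * (lam w.head * (lam (x * w.head))⁻¹) := by
        simp [mul_assoc]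
      rw [e]
      have h3 := wnorm_mul3 (lam g) (τ ^ (u' : ℤ)) (lam w.head * (lam (x * w.head))⁻¹)
      have h4 := wnorm_mul_le (lam w.head) (lam (x * w.head))⁻¹
      rw [wnorm_inv] at h4
      rw [wnorm_zpow_unit] at h3
      have := hM g
      have := hM w.head
      have := hM (x * w.head)
      omega
  · simp only []
    rw [nwLift_cons, nwLift_smul]
    set x : Q := ((unitsSMulGroup φ d u w.head).1 : Q)
    set y : Q := ((unitsSMulGroup φ d u w.head).2 : Q)
    have e : nwLift lam τ w * (lam x * (τ ^ (u : ℤ) * (lam (y * w.head⁻¹ * w.head) *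
      (lam w.head)⁻¹ * nwLift lam τ w)))⁻¹ =
      lam w.head * (lam (y * w.head⁻¹ * w.head))⁻¹ * ((τ ^ (u : ℤ))⁻¹ * (lam x)⁻¹) := by
      simp [mul_assoc]
    rw [e]
    have h3 := wnorm_mul3 (lam w.head) (lam (y * w.head⁻¹ * w.head))⁻¹
      ((τ ^ (u : ℤ))⁻¹ * (lam x)⁻¹)
    have h4 := wnorm_mul_le (τ ^ (u : ℤ))⁻¹ (lam x)⁻¹
    simp only [wnorm_inv, wnorm_zpow_unit] at h3 h4
    have := hM w.head
    have := hM (y * w.head⁻¹ * w.head)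
    have := hM x
    omega

theorem wnorm_le_one {w : FreeGroup ι} (h : wnorm w ≤ 1) :
    w = 1 ∨ ∃ x, w = FreeGroup.of x ∨ w = (FreeGroup.of x)⁻¹ := by
  have h1 := mk_wd w
  rw [← wd_length] at h
  match hw : wd w, h with
  | [], _ => left; rw [hw] at h1; exact h1.symm
  | [(x, b)], _ =>
    right
    rw [hw] at h1
    refine ⟨x, ?_⟩
    cases b
    · right; rw [← h1]; rfl
    · left; rw [← h1]; rfl
  | a :: b :: l, h => simp at h

theorem hnn_TS [Finite Q] (Φ : FreeGroup ι →* HNNExtension Q A B φ) (lam : Q → FreeGroup ι)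
    (τ : FreeGroup ι) (hl : ∀ g, Φ (lam g) = of g) (hτ : Φ τ = t)
    (hgen : ∀ x, (∃ g, Φ (FreeGroup.of x) = of g) ∨ Φ (FreeGroup.of x) = t) :
    ∃ C σ, TS Φ C σ := by
  obtain ⟨d⟩ := TransversalPair.nonempty Q A B
  obtain ⟨M, hM⟩ : ∃ M, ∀ g, wnorm (lam g) ≤ M := by
    obtain ⟨M, hM⟩ := (Set.finite_range (fun g => wnorm (lam g))).bddAbove
    exact ⟨M, fun g => hM ⟨g, rfl⟩⟩
  refine ⟨3 * M + wnorm τ, fun g => (nwLift lam τ (NormalWord.equiv φ d g⁻¹))⁻¹, ?_, ?_⟩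
  · intro g
    rw [map_inv, map_nwLift Φ lam τ hl hτ]
    have : (NormalWord.equiv φ d g⁻¹).prod φ = g⁻¹ := (NormalWord.equiv φ d).symm_apply_apply _
    rw [this, inv_inv]
  · intro g w hw
    have key : ∀ (e x : HNNExtension Q A B φ), ((∃ q, e = of q) ∨ ∃ u : ℤˣ, e = t ^ (u : ℤ)) →
      wnorm (nwLift lam τ (NormalWord.equiv φ d x) * (nwLift lam τ (NormalWord.equiv φ d (e * x)))⁻¹)
       ≤ 3 * M + wnorm τ := by
      rintro e x (⟨q, rfl⟩ | ⟨u, rfl⟩)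
      · have : NormalWord.equiv φ d (of q * x) = q • NormalWord.equiv φ d x := by
          change (of q * x) • (empty : NormalWord d) = q • (x • (empty : NormalWord d))
          rw [mul_smul, of_smul_eq_smul]
        rw [this]
        refine (nwLift_smul_diff lam τ M hM q _).trans (by omega)
      · have : NormalWord.equiv φ d (t ^ (u : ℤ) * x) = unitsSMul φ u (NormalWord.equiv φ d x) := by
          change (t ^ (u : ℤ) * x) • (empty : NormalWord d) = unitsSMul φ u (x • (empty : NormalWord d))
          rw [mul_smul, t_pow_smul_eq_unitsSMul]
        rw [this]
        exact nwLift_units_diff lam τ M hM u _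
    simp only [inv_inv, mul_inv_rev]
    apply key
    rcases wnorm_le_one hw with rfl | ⟨x, rfl | rfl⟩
    · left; exact ⟨1, by simp⟩
    · rcases hgen x with ⟨q, hq⟩ | hq
      · left; exact ⟨q⁻¹, by simp [hq]⟩
      · right; exact ⟨-1, by simp [hq]⟩
    · rcases hgen x with ⟨q, hq⟩ | hq
      · left; exact ⟨q, by simp [hq]⟩
      · right; exact ⟨1, by simp [hq]⟩

theorem hnn_longer (hA : A ≠ ⊤) (hB : B ≠ ⊤) (K : Subgroup (HNNExtension Q A B φ)) (hK : K.Normal)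
    (w : ReducedWord Q A B) (hw : w.prod φ ∈ K) (hne : w.toList ≠ []) :
    ∃ w' : ReducedWord Q A B, w'.prod φ ∈ K ∧ w.toList.length < w'.toList.length := by
  obtain ⟨h, l, hc⟩ := w
  simp only at hne ⊢
  obtain ⟨l', ⟨uk, gk⟩, rfl⟩ : ∃ l' p, l = l' ++ [p] :=
    ⟨l.dropLast, l.getLast hne, (List.dropLast_append_getLast hne).symm⟩
  have hprop : ∀ u : ℤˣ, ∃ y, y ∉ toSubgroup A B u := by
    intro u
    rcases Int.units_eq_one_or u with rfl | rfl
    · by_contra! hh; exact hA (eq_top_iff.2 fun x _ => hh x)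
    · by_contra! hh; exact hB (eq_top_iff.2 fun x _ => hh x)
  obtain ⟨u1, hu1⟩ : ∃ u1, ∀ x : Q, ∃ g l1, l' ++ [(uk, x)] = (u1, g) :: l1 := by
    cases l' with
    | nil => exact ⟨uk, fun x => ⟨x, [], rfl⟩⟩
    | cons a l' => exact ⟨a.1, fun x => ⟨a.2, l' ++ [(uk, x)], rfl⟩⟩
  obtain ⟨η, x, hx1, hx2⟩ : ∃ (η : ℤˣ) (x : Q),
      (x * gk * h ∈ toSubgroup A B η → η = u1) ∧ uk = -η := by
    by_cases huu : u1 = uk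
    · obtain ⟨y, hy⟩ := hprop (-uk)
      refine ⟨-uk, y * h⁻¹ * gk⁻¹, fun hh => absurd ?_ hy, by simp⟩
      simpa [mul_assoc] using hh
    · have : u1 = -uk := Int.units_ne_iff_eq_neg.1 huu
      exact ⟨-uk, 1, fun _ => this.symm, by simp⟩
  have hc1 : (l' ++ [(uk, x⁻¹)]).IsChain (fun a b => a.2 ∈ toSubgroup A B a.1 → a.1 = b.1) := by
    rw [List.isChain_append] at hc ⊢
    refine ⟨hc.1, List.isChain_singleton _, ?_⟩
    intro a ha b hb
    have := hc.2.2 a ha (uk, gk) (by simp)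
    simp at hb
    subst hb
    exact this
  have hc2 : ((l' ++ [(uk, x⁻¹)]) ++ [(-η, (1 : Q))]).IsChain
      (fun a b => a.2 ∈ toSubgroup A B a.1 → a.1 = b.1) := by
    rw [List.isChain_append]
    refine ⟨hc1, List.isChain_singleton _, ?_⟩
    intro a ha b hb
    simp at ha hb
    subst ha hb
    exact fun _ => hx2
  have hc3 : ((η, x * gk * h) :: ((l' ++ [(uk, x⁻¹)]) ++ [(-η, (1 : Q))])).IsChain
      (fun a b => a.2 ∈ toSubgroup A B a.1 → a.1 = b.1) := by
    rw [List.isChain_cons]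
    refine ⟨?_, hc2⟩
    intro a ha
    obtain ⟨g, l1, hl1⟩ := hu1 x⁻¹
    rw [hl1] at ha
    simp at ha
    subst ha
    exact hx1
  refine ⟨⟨1, _, hc3⟩, ?_, by simp⟩
  have := hK.conj_mem _ hw (t ^ (η : ℤ) * of (x * gk))
  convert this using 1
  simp [ReducedWord.prod, mul_assoc]

theorem hnn_finite_normal (hA : A ≠ ⊤) (hB : B ≠ ⊤) (K : Subgroup (HNNExtension Q A B φ))
    (hK : K.Normal) (hf : (K : Set (HNNExtension Q A B φ)).Finite) (x : HNNExtension Q A B φ)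
    (hx : x ∈ K) : ∃ g, x = of g := by
  obtain ⟨d⟩ := TransversalPair.nonempty Q A B
  have hb : BddAbove ((fun y => (NormalWord.equiv φ d y).toList.length) '' (K : Set _)) :=
    (hf.image _).bddAbove
  obtain ⟨M, hM⟩ := hb
  have hM' : ∀ w : ReducedWord Q A B, w.prod φ ∈ K → w.toList.length ≤ M := by
    intro w hw
    have h1 := hM ⟨w.prod φ, hw, rfl⟩
    have h2 : (NormalWord.equiv φ d (w.prod φ)).prod φ = w.prod φ :=
      (NormalWord.equiv φ d).symm_apply_apply _
    have h3 := (ReducedWord.map_fst_eq_and_of_prod_eq φ h2).1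
    have h4 := congrArg List.length h3
    simp only [List.length_map] at h4
    rw [← h4]; exact h1
  have hno : ∀ w : ReducedWord Q A B, w.prod φ ∈ K → w.toList = [] := by
    by_contra! hcon
    obtain ⟨w, hw, hne⟩ := hcon
    have : ∀ k : ℕ, ∃ w : ReducedWord Q A B, w.prod φ ∈ K ∧ w.toList ≠ [] ∧ k ≤ w.toList.length := by
      intro k
      induction k with
      | zero => exact ⟨w, hw, hne, Nat.zero_le _⟩
      | succ k ih =>
        obtain ⟨w, hw, hne, hk⟩ := ih
        obtain ⟨w', h1, h2⟩ := hnn_longer hA hB K hK w hw hne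
        refine ⟨w', h1, ?_, by omega⟩
        intro h0; rw [h0] at h2; simp at h2
    obtain ⟨w, hw, _, h⟩ := this (M + 1)
    have := hM' w hw
    omega
  have h2 : (NormalWord.equiv φ d x).prod φ = x := (NormalWord.equiv φ d).symm_apply_apply _
  have h3 := hno (NormalWord.equiv φ d x).toReducedWord (by rw [h2]; exact hx)
  refine ⟨(NormalWord.equiv φ d x).head, ?_⟩
  conv_lhs => rw [← h2]
  unfold ReducedWord.prod
  rw [h3]; simp

end hnn

section ker
variable {ι : Type*} {Q : Type*} [Group Q]

theorem TS.ker {φ : FreeGroup ι →* Q} {B : ℕ} {σ : Q → FreeGroup ι} (h : TS φ B σ) :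
    ∃ σ', TS (QuotientGroup.mk' φ.ker) B σ' := by
  refine ⟨fun q => σ (QuotientGroup.kerLift φ q), ?_, ?_⟩
  · intro q
    apply QuotientGroup.kerLift_injective φ
    rw [QuotientGroup.mk'_apply, QuotientGroup.kerLift_mk, h.sec]
  · intro q w hw
    rw [map_mul, QuotientGroup.mk'_apply, QuotientGroup.kerLift_mk]
    exact h.lip _ _ hw
end ker
end IsoSpecPaper

namespace IsoSpecPaper

section mark
variable {ι : Type*} [DecidableEq ι] {Γ : Type*} [Group Γ]

/-- The marking sending `x0` to `a`, `x1` to `t` and the other generators to `1`. -/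
def mark (x0 x1 : ι) (a t : Γ) : FreeGroup ι →* Γ :=
  FreeGroup.lift (fun i => if i = x0 then a else if i = x1 then t else 1)

theorem mark_x0 (x0 x1 : ι) (a t : Γ) : mark x0 x1 a t (FreeGroup.of x0) = a := by simp [mark]

theorem mark_x1 {x0 x1 : ι} (h : x0 ≠ x1) (a t : Γ) : mark x0 x1 a t (FreeGroup.of x1) = t := by
  simp [mark, h.symm]

theorem mark_cases (x0 x1 : ι) (a t : Γ) (i : ι) :
    mark x0 x1 a t (FreeGroup.of i) = a ∨ mark x0 x1 a t (FreeGroup.of i) = t ∨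
      mark x0 x1 a t (FreeGroup.of i) = 1 := by
  simp only [mark, FreeGroup.lift_apply_of]
  split_ifs <;> simp

theorem map_mark {Γ' : Type*} [Group Γ'] (x0 x1 : ι) (a t : Γ) (f : Γ →* Γ') (w : FreeGroup ι) :
    f (mark x0 x1 a t w) = mark x0 x1 (f a) (f t) w := by
  have : f.comp (mark x0 x1 a t) = mark x0 x1 (f a) (f t) := by
    ext i
    simp only [mark, MonoidHom.comp_apply, FreeGroup.lift_apply_of]
    split_ifs <;> simp
  rw [← this]; rfl

end mark

section conjHNN
variable {Γ : Type*} [Group Γ]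

/-- elements of `H` whose conjugate by `T` is in `H` -/
def cA (T : Γ) (H : Subgroup Γ) : Subgroup H :=
  (H.comap (MulAut.conj T).toMonoidHom).subgroupOf H

theorem mem_cA (T : Γ) (H : Subgroup Γ) (g : H) : g ∈ cA T H ↔ T * g * T⁻¹ ∈ H := by
  simp [cA, Subgroup.mem_subgroupOf]

theorem mem_cA' (T : Γ) (H : Subgroup Γ) (g : H) : g ∈ cA T⁻¹ H ↔ T⁻¹ * g * T ∈ H := by
  simp [cA, Subgroup.mem_subgroupOf]

/-- conjugation -/
def cφ (T : Γ) (H : Subgroup Γ) : cA T H ≃* cA T⁻¹ H where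
  toFun g := ⟨⟨T * g * T⁻¹, (mem_cA T H g).1 g.2⟩, by
    rw [mem_cA']; simp [mul_assoc]⟩
  invFun g := ⟨⟨T⁻¹ * g * T, (mem_cA' T H g).1 g.2⟩, by
    rw [mem_cA]; simp [mul_assoc]⟩
  left_inv g := by ext; simp [mul_assoc]
  right_inv g := by ext; simp [mul_assoc]
  map_mul' g h := by ext; simp [mul_assoc]

theorem cφ_coe (T : Γ) (H : Subgroup Γ) (g : cA T H) :
    (((cφ T H g : H)) : Γ) = T * g * T⁻¹ := rfl

/-- the HNN extension -/
abbrev EH (T : Γ) (H : Subgroup Γ) := HNNExtension H (cA T H) (cA T⁻¹ H) (cφ T H)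

/-- map to the ambient group -/
def psi (T : Γ) (H : Subgroup Γ) : EH T H →* Γ :=
  HNNExtension.lift H.subtype T (by
    intro a
    simp [cφ_coe])

theorem psi_of (T : Γ) (H : Subgroup Γ) (g : H) : psi T H (HNNExtension.of g) = g :=
  HNNExtension.lift_of _ _ _ g

theorem psi_t (T : Γ) (H : Subgroup Γ) : psi T H HNNExtension.t = T :=
  HNNExtension.lift_t _ _ _

end conjHNN

/-- Abstract properties of our actions. -/
structure Good {Ω : Type*} (lev : Ω → ℤ) (T a : Equiv.Perm Ω) (R : ℕ) (β : Set Ω) : Prop where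
  levT : ∀ ω, lev (T ω) = lev ω + 1
  leva : ∀ ω, lev (a ω) = lev ω
  supp : ∀ ω, (R : ℤ) < |lev ω| → a ω = ω
  fin : ∀ l : ℤ, {ω | |lev ω| ≤ l}.Finite
  ne : ∃ ω ∈ β, lev ω = 0
  memT : ∀ ω, T ω ∈ β ↔ ω ∈ β
  mema : ∀ ω, a ω ∈ β ↔ ω ∈ β
  fixa : ∀ ω ∈ β, lev ω ≠ 0 → a ω = ω
  mova : ∀ ω ∈ β, lev ω = 0 → a ω ≠ ω

section good
variable {Ω : Type*} {lev : Ω → ℤ} {T a : Equiv.Perm Ω} {R : ℕ} {β : Set Ω}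

/-- translates of `a` -/
def aj (T a : Equiv.Perm Ω) (j : ℤ) : Equiv.Perm Ω := T ^ j * a * (T ^ j)⁻¹

theorem aj_succ (T a : Equiv.Perm Ω) (j : ℤ) : aj T a (j + 1) = T * aj T a j * T⁻¹ := by
  unfold aj; rw [add_comm, zpow_add]; simp [mul_assoc]

theorem aj_zero (T a : Equiv.Perm Ω) : aj T a 0 = a := by simp [aj]

/-- the subgroup generated by finitely many translates -/
def HN (T a : Equiv.Perm Ω) (N : ℕ) : Subgroup (Equiv.Perm Ω) :=
  Subgroup.closure {g | ∃ j : ℕ, j ≤ N ∧ g = aj T a j}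

theorem aj_mem (T a : Equiv.Perm Ω) {N j : ℕ} (h : j ≤ N) : aj T a j ∈ HN T a N :=
  Subgroup.subset_closure ⟨j, h, rfl⟩

theorem Good.levTn (h : Good lev T a R β) (j : ℕ) (ω : Ω) : lev ((T ^ j) ω) = lev ω + j := by
  induction j with
  | zero => simp
  | succ j ih => rw [pow_succ', Equiv.Perm.mul_apply, h.levT, ih]; push_cast; ring

theorem Good.levTz (h : Good lev T a R β) (j : ℤ) (ω : Ω) : lev ((T ^ j) ω) = lev ω + j := by
  obtain ⟨n, rfl | rfl⟩ := j.eq_nat_or_neg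
  · exact_mod_cast h.levTn n ω
  · have := h.levTn n ((T ^ (-(n : ℤ))) ω)
    rw [← Equiv.Perm.mul_apply, zpow_neg, zpow_natCast, mul_inv_cancel, Equiv.Perm.one_apply] at this
    rw [zpow_neg, zpow_natCast]
    omega

theorem Good.memTn (h : Good lev T a R β) (j : ℕ) (ω : Ω) : (T ^ j) ω ∈ β ↔ ω ∈ β := by
  induction j with
  | zero => simp
  | succ j ih => rw [pow_succ', Equiv.Perm.mul_apply, h.memT, ih]

theorem Good.memTz (h : Good lev T a R β) (j : ℤ) (ω : Ω) : (T ^ j) ω ∈ β ↔ ω ∈ β := by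
  obtain ⟨n, rfl | rfl⟩ := j.eq_nat_or_neg
  · exact_mod_cast h.memTn n ω
  · have := h.memTn n ((T ^ (-(n : ℤ))) ω)
    rw [← Equiv.Perm.mul_apply, zpow_neg, zpow_natCast, mul_inv_cancel, Equiv.Perm.one_apply] at this
    rw [zpow_neg, zpow_natCast]
    exact this.symm

theorem aj_apply (T a : Equiv.Perm Ω) (j : ℤ) (ω : Ω) :
    aj T a j ω = (T ^ j) (a ((T ^ (-j)) ω)) := by simp [aj]

theorem aj_fix (T a : Equiv.Perm Ω) (j : ℤ) (ω : Ω) (h : a ((T ^ (-j)) ω) = (T ^ (-j)) ω) :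
    aj T a j ω = ω := by
  rw [aj_apply, h]; simp

theorem Good.HN_props (h : Good lev T a R β) (N : ℕ) (g : Equiv.Perm Ω) (hg : g ∈ HN T a N) :
    (∀ ω, lev (g ω) = lev ω) ∧ (∀ ω, ((R + N : ℕ) : ℤ) < |lev ω| → g ω = ω) ∧
      (∀ ω ∈ β, lev ω < 0 ∨ (N : ℤ) < lev ω → g ω = ω) := by
  induction hg using Subgroup.closure_induction with
  | mem g hg =>
    obtain ⟨j, hj, rfl⟩ := hg
    refine ⟨?_, ?_, ?_⟩
    · intro ω
      rw [aj_apply, h.levTz, h.leva, h.levTz]; ring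
    · intro ω hω
      apply aj_fix
      apply h.supp
      rw [h.levTz]
      push_cast at hω
      rw [lt_abs] at hω ⊢
      omega
    · intro ω hβ hω
      apply aj_fix
      apply h.fixa _ ((h.memTz _ _).2 hβ)
      rw [h.levTz]
      omega
  | one => simp
  | mul x y _ _ hx hy =>
    refine ⟨?_, ?_, ?_⟩
    · intro ω; rw [Equiv.Perm.mul_apply, hx.1, hy.1]
    · intro ω hω; rw [Equiv.Perm.mul_apply, hy.2.1 ω hω, hx.2.1 ω hω]
    · intro ω hω h2; rw [Equiv.Perm.mul_apply, hy.2.2 ω hω h2, hx.2.2 ω hω h2]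
  | inv x _ hx =>
    refine ⟨?_, ?_, ?_⟩
    · intro ω
      have := hx.1 (x⁻¹ ω)
      rw [← this]; simp
    · intro ω hω; rw [Equiv.Perm.inv_eq_iff_eq, hx.2.1 ω hω]
    · intro ω hω h2; rw [Equiv.Perm.inv_eq_iff_eq, hx.2.2 ω hω h2]

theorem Good.HN_finite (h : Good lev T a R β) (N : ℕ) : Finite (HN T a N) := by
  have hfin := h.fin ((R + N : ℕ) : ℤ)
  let p : Ω → Prop := fun ω => |lev ω| ≤ ((R + N : ℕ) : ℤ)
  have : Finite {ω // p ω} := hfin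
  classical
  have h1 : Finite {f : Equiv.Perm Ω // ∀ x, ¬ p x → f x = x} :=
    Finite.of_equiv _ (Equiv.Perm.subtypeEquivSubtypePerm p)
  refine Finite.of_injective (β := {f : Equiv.Perm Ω // ∀ x, ¬ p x → f x = x})
    (fun g => ⟨g.1, fun x hx => (h.HN_props N g.1 g.2).2.1 x (not_le.1 hx)⟩) ?_
  intro x y hxy
  exact Subtype.ext (congrArg (fun z => (z.1 : Equiv.Perm Ω)) hxy)

theorem Good.cA_ne (h : Good lev T a R β) (N : ℕ) : cA T (HN T a N) ≠ ⊤ := by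
  intro htop
  have h1 : (⟨aj T a N, aj_mem T a le_rfl⟩ : HN T a N) ∈ cA T (HN T a N) := by rw [htop]; trivial
  rw [mem_cA] at h1
  simp only [] at h1
  rw [← aj_succ] at h1
  obtain ⟨ω, hω, h0⟩ := h.ne
  have h2 := (h.HN_props N _ h1).2.2 ((T ^ ((N : ℤ) + 1)) ω) ((h.memTz _ _).2 hω) (by
    right; rw [h.levTz, h0]; omega)
  rw [aj_apply, ← Equiv.Perm.mul_apply (T ^ (-((N : ℤ) + 1))), ← zpow_add] at h2
  simp at h2
  exact h.mova ω hω h0 h2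

theorem Good.cA_ne' (h : Good lev T a R β) (N : ℕ) : cA T⁻¹ (HN T a N) ≠ ⊤ := by
  intro htop
  have h1 : (⟨aj T a (0 : ℕ), aj_mem T a (Nat.zero_le _)⟩ : HN T a N) ∈ cA T⁻¹ (HN T a N) := by
    rw [htop]; trivial
  rw [mem_cA'] at h1
  have e : T⁻¹ * aj T a (0 : ℕ) * T = aj T a (-1) := by simp [aj]
  simp only [] at h1
  rw [e] at h1
  obtain ⟨ω, hω, h0⟩ := h.ne
  have h2 := (h.HN_props N _ h1).2.2 ((T ^ (-1 : ℤ)) ω) ((h.memTz _ _).2 hω) (by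
    left; rw [h.levTz, h0]; omega)
  rw [aj_apply, ← Equiv.Perm.mul_apply (T ^ (- (-1 : ℤ))), ← zpow_add] at h2
  simp at h2
  exact h.mova ω hω h0 h2

theorem Good.no_fin (h : Good lev T a R β) (N : ℕ) (K : Subgroup (EH T (HN T a N)))
    (hK : K.Normal) (hf : (K : Set (EH T (HN T a N))).Finite) : K = ⊥ := by
  rw [Subgroup.eq_bot_iff_forall]
  intro x hx
  obtain ⟨g, rfl⟩ := hnn_finite_normal (h.cA_ne N) (h.cA_ne' N) K hK hf x hx
  set c : ℕ := 2 * (R + N) + 1 with hc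
  have h1 := hK.conj_mem _ hx (HNNExtension.t ^ c)
  obtain ⟨g', hg'⟩ := hnn_finite_normal (h.cA_ne N) (h.cA_ne' N) K hK hf _ h1
  have h2 := congrArg (psi T (HN T a N)) hg'
  simp only [map_mul, map_inv, map_pow, psi_of, psi_t] at h2
  have : g = 1 := by
    apply Subtype.ext
    ext ω
    by_cases hω : ((R + N : ℕ) : ℤ) < |lev ω|
    · exact (h.HN_props N g.1 g.2).2.1 ω hω
    · have h3 := (h.HN_props N g'.1 g'.2).2.1 ((T ^ c) ω) (by
        rw [h.levTn]
        rw [not_lt, abs_le] at hω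
        rw [lt_abs]
        push_cast at *
        omega)
      rw [← h2] at h3
      simpa using h3
  rw [this, map_one]


variable {ι : Type*} [DecidableEq ι]

/-- the marking of the HNN extension -/
noncomputable def PhiN (x0 x1 : ι) (T a : Equiv.Perm Ω) (N : ℕ) : FreeGroup ι →* EH T (HN T a N) :=
  mark x0 x1 (HNNExtension.of ⟨aj T a (0 : ℕ), aj_mem T a (Nat.zero_le _)⟩) HNNExtension.t

theorem psi_PhiN (x0 x1 : ι) (T a : Equiv.Perm Ω) (N : ℕ) (w : FreeGroup ι) :
    psi T (HN T a N) (PhiN x0 x1 T a N w) = mark x0 x1 a T w := by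
  unfold PhiN
  rw [map_mark, psi_of, psi_t]
  simp [aj]

theorem of_aj (T a : Equiv.Perm Ω) (N : ℕ) (j : ℕ) (hj : j ≤ N) :
    (HNNExtension.of ⟨aj T a j, aj_mem T a hj⟩ : EH T (HN T a N)) * HNNExtension.t ^ j =
    HNNExtension.t ^ j * HNNExtension.of ⟨aj T a (0 : ℕ), aj_mem T a (Nat.zero_le _)⟩ := by
  induction j with
  | zero => simp
  | succ j ih =>
    have h1 := ih (by omega)
    have hm : (⟨aj T a j, aj_mem T a (by omega)⟩ : HN T a N) ∈ cA T (HN T a N) := by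
      rw [mem_cA]
      simp only []
      rw [← aj_succ]
      exact_mod_cast aj_mem T a hj
    have h2 := HNNExtension.t_mul_of (φ := cφ T (HN T a N)) ⟨_, hm⟩
    have h3 : ((cφ T (HN T a N)) ⟨_, hm⟩ : HN T a N) = ⟨aj T a ((j + 1 : ℕ) : ℤ), aj_mem T a hj⟩ := by
      apply Subtype.ext
      rw [cφ_coe]
      simp only []
      rw [← aj_succ]
      push_cast; rfl
    rw [h3] at h2
    simp only [] at h2
    rw [pow_succ', ← mul_assoc, ← h2, mul_assoc, h1, mul_assoc]

theorem lam_ex {x0 x1 : ι} (hx : x0 ≠ x1) (T a : Equiv.Perm Ω) (N : ℕ) (g : HN T a N) :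
    ∃ w, PhiN x0 x1 T a N w = HNNExtension.of g := by
  obtain ⟨g, hg⟩ := g
  induction hg using Subgroup.closure_induction with
  | mem g hg =>
    obtain ⟨j, hj, rfl⟩ := hg
    refine ⟨FreeGroup.of x1 ^ j * FreeGroup.of x0 * (FreeGroup.of x1 ^ j)⁻¹, ?_⟩
    simp only [map_mul, map_inv, map_pow]
    unfold PhiN
    rw [mark_x0, mark_x1 hx, ← of_aj T a N j hj, mul_inv_cancel_right]
  | one => exact ⟨1, by rw [map_one]; exact (map_one _).symm⟩
  | mul x y hx hy h1 h2 =>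
    obtain ⟨u, hu⟩ := h1
    obtain ⟨v, hv⟩ := h2
    refine ⟨u * v, ?_⟩
    rw [map_mul, hu, hv, ← map_mul]; rfl
  | inv x hx h1 =>
    obtain ⟨u, hu⟩ := h1
    refine ⟨u⁻¹, ?_⟩
    rw [map_inv, hu, ← map_inv]; rfl

theorem PhiN_TS {x0 x1 : ι} (hx : x0 ≠ x1) (h : Good lev T a R β) (N : ℕ) :
    ∃ C σ, TS (PhiN x0 x1 T a N) C σ := by
  have := h.HN_finite N
  choose lam hl using lam_ex hx T a N
  refine hnn_TS (PhiN x0 x1 T a N) lam (FreeGroup.of x1) hl ?_ ?_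
  · unfold PhiN; rw [mark_x1 hx]
  · intro x
    unfold PhiN
    rcases mark_cases x0 x1 (HNNExtension.of ⟨aj T a (0 : ℕ), aj_mem T a (Nat.zero_le _)⟩ :
      EH T (HN T a N)) HNNExtension.t x with h | h | h
    · left; exact ⟨_, h⟩
    · right; exact h
    · left; exact ⟨1, by rw [h, map_one]⟩

theorem ball_aux {x0 x1 : ι} (T a : Equiv.Perm Ω) (L : ℕ) (l : List (ι × Bool)) (hl : l.length ≤ L) :
    ∃ (j : ℕ) (g : HN T a (2 * L)), L ≤ j + l.length ∧ j ≤ L + l.length ∧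
      HNNExtension.t ^ L * PhiN x0 x1 T a (2 * L) (FreeGroup.mk l) =
        HNNExtension.of g * HNNExtension.t ^ j := by
  induction l using List.reverseRecOn with
  | nil =>
    refine ⟨L, 1, by simp, by simp, ?_⟩
    have : FreeGroup.mk ([] : List (ι × Bool)) = 1 := rfl
    rw [this, map_one, map_one]; simp
  | append_singleton l x ih =>
    simp only [List.length_append, List.length_singleton] at hl ⊢
    obtain ⟨j, g, h1, h2, h3⟩ := ih (by omega)
    rw [← FreeGroup.mul_mk, map_mul, ← mul_assoc, h3]
    have hj : j ≤ 2 * L := by omega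
    have h4 := of_aj T a (2 * L) j hj
    set α : EH T (HN T a (2 * L)) :=
      HNNExtension.of ⟨aj T a (0 : ℕ), aj_mem T a (Nat.zero_le _)⟩ with hα
    set q : HN T a (2 * L) := ⟨aj T a j, aj_mem T a hj⟩ with hq
    have h5 : HNNExtension.of q⁻¹ * HNNExtension.t ^ j = HNNExtension.t ^ j * α⁻¹ := by
      rw [map_inv, inv_mul_eq_iff_eq_mul, ← mul_assoc, h4, mul_inv_cancel_right]
    obtain ⟨i, b⟩ := x
    have hx : PhiN x0 x1 T a (2 * L) (FreeGroup.mk [(i, b)]) =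
        cond b (PhiN x0 x1 T a (2 * L) (FreeGroup.of i)) (PhiN x0 x1 T a (2 * L) (FreeGroup.of i))⁻¹ := by
      cases b
      · simp only [cond_false]
        rw [← map_inv]; rfl
      · rfl
    rw [hx]
    have hcase : PhiN x0 x1 T a (2 * L) (FreeGroup.of i) = α ∨
      PhiN x0 x1 T a (2 * L) (FreeGroup.of i) = HNNExtension.t ∨
      PhiN x0 x1 T a (2 * L) (FreeGroup.of i) = 1 := mark_cases _ _ _ _ i
    rcases hcase with h | h | h <;> rw [h] <;> cases b <;> simp only [cond_false, cond_true]
    · refine ⟨j, g * q⁻¹, by omega, by omega, ?_⟩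
      rw [mul_assoc, ← h5, map_mul, mul_assoc]
    · refine ⟨j, g * q, by omega, by omega, ?_⟩
      rw [mul_assoc, ← h4, map_mul, mul_assoc]
    · refine ⟨j - 1, g, by omega, by omega, ?_⟩
      obtain ⟨j', rfl⟩ : ∃ j', j = j' + 1 := ⟨j - 1, by omega⟩
      rw [pow_succ, Nat.add_sub_cancel]; simp [mul_assoc]
    · refine ⟨j + 1, g, by omega, by omega, ?_⟩
      rw [pow_succ, mul_assoc]
    · exact ⟨j, g, by omega, by omega, by simp⟩
    · exact ⟨j, g, by omega, by omega, by simp⟩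

theorem ball {x0 x1 : ι} (h : Good lev T a R β) (L : ℕ) (w : FreeGroup ι) (hw : wnorm w ≤ L)
    (h1 : mark x0 x1 a T w = 1) : PhiN x0 x1 T a (2 * L) w = 1 := by
  obtain ⟨j, g, -, -, h2⟩ := ball_aux (x0 := x0) (x1 := x1) T a L (wd w) hw
  rw [mk_wd] at h2
  have h3 := congrArg (psi T (HN T a (2 * L))) h2
  rw [map_mul, map_mul, psi_PhiN, h1, map_pow, map_pow, psi_t, psi_of, mul_one] at h3
  obtain ⟨ω, -, -⟩ := h.ne
  have h4 := congrArg lev (Equiv.congr_fun h3 ω)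
  rw [Equiv.Perm.mul_apply, (h.HN_props _ g.1 g.2).1, h.levTn, h.levTn] at h4
  have h5 : L = j := by omega
  subst h5
  have h6 : g = 1 := by
    apply Subtype.ext
    exact (mul_eq_right.1 h3.symm)
  rw [h6, map_one, one_mul] at h2
  exact mul_eq_left.1 h2

theorem ta_pow (h : Good lev T a R β) (n : ℕ) (ω : Ω) (hω : ω ∈ β) (h0 : 0 < lev ω) :
    ((T * a) ^ n) ω = (T ^ n) ω := by
  induction n with
  | zero => simp
  | succ n ih =>
    rw [pow_succ', Equiv.Perm.mul_apply, ih, Equiv.Perm.mul_apply,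
      h.fixa _ ((h.memTn _ _).2 hω), pow_succ', Equiv.Perm.mul_apply]
    rw [h.levTn]; omega

theorem no_comm (h : Good lev T a R β) (m n : ℕ) (hm : 0 < m) (hn : 0 < n)
    (hc : T ^ m * (T * a) ^ n = (T * a) ^ n * T ^ m) : False := by
  obtain ⟨ω, hω, h0⟩ := h.ne
  have h1 := Equiv.congr_fun hc ω
  obtain ⟨n, rfl⟩ : ∃ k, n = k + 1 := ⟨n - 1, by omega⟩
  rw [Equiv.Perm.mul_apply, Equiv.Perm.mul_apply, ta_pow h _ _ ((h.memTn _ _).2 hω)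
    (by rw [h.levTn, h0]; omega), pow_succ (T * a), Equiv.Perm.mul_apply (f := (T * a) ^ n), Equiv.Perm.mul_apply,
    ta_pow h _ _ ((h.memT _).2 ((h.mema _).2 hω)) (by rw [h.levT, h.leva, h0]; omega)] at h1
  apply h.mova ω hω h0
  have e1 : (T ^ m) ((T ^ n) (T (a ω))) = (T ^ (m + n + 1)) (a ω) := by
    rw [pow_succ, pow_add]; rfl
  have e2 : (T ^ (n + 1)) ((T ^ m) ω) = (T ^ (m + n + 1)) ω := by
    rw [← Equiv.Perm.mul_apply, ← pow_add]; congr 2; omega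
  rw [e1, e2] at h1
  exact (T ^ (m + n + 1)).injective h1

theorem nonelem {x0 x1 : ι} (hx : x0 ≠ x1) (h : Good lev T a R β) (K : Subgroup (FreeGroup ι))
    [K.Normal] (hK : K ≤ (mark x0 x1 a T).ker) :
    ¬ ∃ g : FreeGroup ι ⧸ K, (Subgroup.zpowers g).index ≠ 0 := by
  rintro ⟨g, hg⟩
  obtain ⟨m, hm, -, hm1⟩ := Subgroup.exists_pow_mem_of_index_ne_zero hg
    (QuotientGroup.mk' K (FreeGroup.of x1))
  obtain ⟨n, hn, -, hn1⟩ := Subgroup.exists_pow_mem_of_index_ne_zero hg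
    (QuotientGroup.mk' K (FreeGroup.of x1 * FreeGroup.of x0))
  obtain ⟨i, hi⟩ := hm1
  obtain ⟨j, hj⟩ := hn1
  simp only [] at hi hj
  have hc : QuotientGroup.mk' K (FreeGroup.of x1) ^ m *
      QuotientGroup.mk' K (FreeGroup.of x1 * FreeGroup.of x0) ^ n =
      QuotientGroup.mk' K (FreeGroup.of x1 * FreeGroup.of x0) ^ n *
      QuotientGroup.mk' K (FreeGroup.of x1) ^ m := by
    rw [← hi, ← hj, ← zpow_add, ← zpow_add, add_comm]
  rw [← map_pow, ← map_pow, ← map_mul, ← map_mul, QuotientGroup.mk'_apply, QuotientGroup.mk'_apply,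
    QuotientGroup.eq] at hc
  have h2 := hK hc
  rw [MonoidHom.mem_ker, map_mul, map_inv, inv_mul_eq_one] at h2
  simp only [map_mul, map_pow, mark_x0, mark_x1 hx] at h2
  exact no_comm h m n hm hn h2

theorem key {x0 x1 : ι} (hx : x0 ≠ x1) (h : Good lev T a R β) (L : ℕ) :
    ∃ (K : Subgroup (FreeGroup ι)) (_ : K.Normal) (B : ℕ), K ≤ (mark x0 x1 a T).ker ∧
      (∀ w, wnorm w ≤ L → mark x0 x1 a T w = 1 → w ∈ K) ∧
      (∀ w ∈ K, AreaLe {r | wnorm r ≤ B ∧ r ∈ K} w (wnorm w)) ∧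
      IsHyperbolic (QuotientGroup.mk' K) ∧
      (¬ ∃ g : FreeGroup ι ⧸ K, (Subgroup.zpowers g).index ≠ 0) ∧
      (∀ S : Subgroup (FreeGroup ι ⧸ K), S.Normal →
          (S : Set (FreeGroup ι ⧸ K)).Finite → S = ⊥) := by
  obtain ⟨C, σ, hTS⟩ := PhiN_TS hx h (2 * L)
  have hle : (PhiN x0 x1 T a (2 * L)).ker ≤ (mark x0 x1 a T).ker := by
    intro w hw
    rw [MonoidHom.mem_ker] at hw ⊢
    rw [← psi_PhiN x0 x1 T a (2 * L), hw, map_one]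
  refine ⟨(PhiN x0 x1 T a (2 * L)).ker, inferInstance, C + 1, hle, ?_, ?_, ?_, ?_, ?_⟩
  · intro w hw h1
    exact ball h L w hw h1
  · intro w hw
    exact hTS.area w hw
  · obtain ⟨σ', h'⟩ := hTS.ker
    exact h'.hyp
  · exact nonelem hx h _ hle
  · intro S hS hf
    let e := QuotientGroup.quotientKerEquivOfSurjective _ hTS.surj
    have h1 := h.no_fin (2 * L) (S.map e.toMonoidHom) (hS.map _ e.surjective) (by
      rw [Subgroup.coe_map]; exact hf.image _)
    exact (Subgroup.map_eq_bot_iff_of_injective _ e.injective).1 h1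

end good
end IsoSpecPaper

namespace IsoSpecPaper

section rel
variable {ι : Type*} [DecidableEq ι] {Ω Ω' : Type*}

theorem mark_rel_list (x0 x1 : ι) {a T : Equiv.Perm Ω} {a' T' : Equiv.Perm Ω'}
    (ha : Involutive a) (ha' : Involutive a') (L : ℕ)
    (Rel : ℕ → Ω → Ω' → Prop)
    (h : ∀ n < L, ∀ ω ω', Rel n ω ω' → Rel (n + 1) (a ω) (a' ω') ∧ Rel (n + 1) (T ω) (T' ω') ∧
      Rel (n + 1) (T⁻¹ ω) (T'⁻¹ ω') ∧ Rel (n + 1) ω ω') {ω : Ω} {ω' : Ω'} (h0 : Rel 0 ω ω')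
    (l : List (ι × Bool)) (hl : l.length ≤ L) :
    Rel l.length (mark x0 x1 a T (FreeGroup.mk l) ω) (mark x0 x1 a' T' (FreeGroup.mk l) ω') := by
  induction l with
  | nil => exact h0
  | cons x l ih =>
    simp only [List.length_cons] at hl ⊢
    have h1 := h _ (by omega) _ _ (ih (by omega))
    have e : FreeGroup.mk (x :: l) = FreeGroup.mk [x] * FreeGroup.mk l := by
      rw [FreeGroup.mul_mk]; rfl
    rw [e, map_mul, map_mul, Equiv.Perm.mul_apply, Equiv.Perm.mul_apply]
    obtain ⟨i, b⟩ := x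
    have hi : a⁻¹ = a := by
      rw [inv_eq_iff_mul_eq_one]; ext x; exact ha x
    have hi' : a'⁻¹ = a' := by
      rw [inv_eq_iff_mul_eq_one]; ext x; exact ha' x
    have e1 : FreeGroup.mk [(i, b)] = cond b (FreeGroup.of i) (FreeGroup.of i)⁻¹ := by
      cases b <;> rfl
    rw [e1]
    obtain ⟨r1, r2, r3, r4⟩ := h1
    by_cases h2 : i = x0
    · cases b <;> simpa [mark, h2, hi, hi'] using r1
    · by_cases h3 : i = x1
      · cases b
        · simpa [mark, h2, h3, h3 ▸ h2] using r3
        · simpa [mark, h2, h3, h3 ▸ h2] using r2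
      · cases b <;> simpa [mark, h2, h3] using r4

theorem mark_rel (x0 x1 : ι) {a T : Equiv.Perm Ω} {a' T' : Equiv.Perm Ω'}
    (ha : Involutive a) (ha' : Involutive a')
    (Rel : ℕ → Ω → Ω' → Prop) (w : FreeGroup ι)
    (h : ∀ n < wnorm w, ∀ ω ω', Rel n ω ω' → Rel (n + 1) (a ω) (a' ω') ∧ Rel (n + 1) (T ω) (T' ω') ∧
      Rel (n + 1) (T⁻¹ ω) (T'⁻¹ ω') ∧ Rel (n + 1) ω ω') {ω : Ω} {ω' : Ω'} (h0 : Rel 0 ω ω') :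
    Rel (wnorm w) (mark x0 x1 a T w ω) (mark x0 x1 a' T' w ω') := by
  have := mark_rel_list x0 x1 ha ha' (wnorm w) Rel h h0 (wd w) le_rfl
  rwa [mk_wd, wd_length] at this

end rel

section conc
variable {Z : Type*} [CommRing Z]

/-- sign -/
def sg (e : Bool) : Z := cond e 1 (-1)

theorem sg_not (e : Bool) : (sg (!e) : Z) = - sg e := by cases e <;> simp [sg]

/-- the action of the generator `a` -/
def aFun (p : ℤ) (ω : ℤ × Bool × Z) : ℤ × Bool × Z :=
  if ω.1 = 0 then (ω.1, !ω.2.1, ω.2.2) else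
  if ω.1 = p then (ω.1, !ω.2.1, ω.2.2 + sg ω.2.1) else ω

theorem aFun_inv (p : ℤ) : Involutive (aFun p : ℤ × Bool × Z → _) := by
  rintro ⟨l, e, y⟩
  unfold aFun
  by_cases h : l = 0
  · simp [h]
  · by_cases h1 : l = p
    · simp only [h1] at h ⊢
      simp [h, sg_not]
    · simp [h, h1]

/-- the action of the generator `a`, as a permutation -/
def aP (Z : Type*) [CommRing Z] (p : ℤ) : Equiv.Perm (ℤ × Bool × Z) := (aFun_inv p).toPerm

/-- shift -/
def tP (X : Type*) : Equiv.Perm (ℤ × X) := Equiv.prodCongr (Equiv.addRight (1 : ℤ)) (Equiv.refl X)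

theorem tP_apply (X : Type*) (l : ℤ) (x : X) : tP X (l, x) = (l + 1, x) := rfl
theorem tP_inv_apply (X : Type*) (l : ℤ) (x : X) : (tP X)⁻¹ (l, x) = (l - 1, x) := rfl

theorem aP_apply (p : ℤ) (l : ℤ) (e : Bool) (y : Z) : aP Z p (l, e, y) =
  if l = 0 then (l, !e, y) else if l = p then (l, !e, y + sg e) else (l, e, y) := rfl

theorem aP_invol (p : ℤ) : Involutive (aP Z p) := aFun_inv p

variable {ι : Type*} [DecidableEq ι]

/-- the action with parameters `d = (p, M)` -/
def rho (x0 x1 : ι) (d : ℕ × ℕ) : FreeGroup ι →* Equiv.Perm (ℤ × Bool × ZMod (d.2 + 1)) :=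
  mark x0 x1 (aP _ (d.1 : ℤ)) (tP _)

theorem local_lemma (x0 x1 : ι) (d : ℕ × ℕ) (w : FreeGroup ι) (hp : 2 * wnorm w < d.1)
    (h0 : rho x0 x1 (0, 0) w = 1) : rho x0 x1 d w = 1 := by
  obtain ⟨p, M⟩ := d
  simp only at hp
  ext1 ⟨l0, e, y⟩
  rw [Equiv.Perm.one_apply]
  by_cases hl : |l0| ≤ wnorm w
  · have := mark_rel x0 x1 (aP_invol (Z := ZMod (0 + 1)) ((0 : ℕ) : ℤ)) (aP_invol (Z := ZMod (M + 1)) (p : ℤ))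
      (T := tP _) (T' := tP _)
      (fun n ω ω' => ω'.1 = ω.1 ∧ ω'.2.1 = ω.2.1 ∧ ω'.2.2 = y ∧ |ω.1 - l0| ≤ n) w (by
        rintro n hn ⟨l, e, c⟩ ⟨l', e', c'⟩ ⟨h1, h2, h3, h4⟩
        simp only at h1 h2 h3 h4
        subst h1 h2 h3
        rw [abs_le] at h4 hl
        refine ⟨?_, ?_, ?_, ?_⟩
        · simp only [aP_apply]
          have : l' ≠ p := by omega
          by_cases h5 : l' = 0
          · simp [h5, abs_le]; omega
          · simp [h5, this, abs_le]; omega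
        · simp only [tP_apply, abs_le]; refine ⟨trivial, trivial, trivial, ?_⟩; push_cast; omega
        · simp only [tP_inv_apply, abs_le]; refine ⟨trivial, trivial, trivial, ?_⟩; push_cast; omega
        · simp only [abs_le]; refine ⟨trivial, trivial, trivial, ?_⟩; push_cast; omega)
      (ω := (l0, e, 0)) (ω' := (l0, e, y)) (by simp)
    have e1 : mark x0 x1 (aP (ZMod (0 + 1)) ((0 : ℕ) : ℤ)) (tP _) w = 1 := h0
    rw [e1] at this
    simp only [Equiv.Perm.one_apply] at this
    obtain ⟨h1, h2, h3, -⟩ := this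
    exact Prod.ext h1 (Prod.ext h2 h3)
  · have := mark_rel x0 x1 (aP_invol (Z := ZMod (0 + 1)) ((0 : ℕ) : ℤ)) (aP_invol (Z := ZMod (M + 1)) (p : ℤ))
      (T := tP _) (T' := tP _)
      (fun n ω ω' => ω'.1 = ω.1 + p ∧ ω'.2.1 = ω.2.1 ∧
        ω'.2.2 = y + cond e 1 0 - cond ω.2.1 1 0 ∧ |ω'.1 - l0| ≤ n) w (by
        rintro n hn ⟨l, e, c⟩ ⟨l', e', c'⟩ ⟨h1, h2, h3, h4⟩
        simp only at h1 h2 h3 h4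
        subst h1 h2 h3
        rw [abs_le] at h4
        rw [not_le, lt_abs] at hl
        refine ⟨?_, ?_, ?_, ?_⟩
        · simp only [aP_apply]
          have : l + p ≠ 0 := by omega
          by_cases h5 : l = 0
          · subst h5
            rw [if_pos rfl, if_neg this, if_pos (by omega)]
            refine ⟨rfl, rfl, ?_, ?_⟩
            · cases e' <;> simp [sg, sub_eq_add_neg]
            · simp only [abs_le]; push_cast; omega
          · rw [if_neg h5, if_neg this, if_neg (by omega), if_neg (by push_cast; omega)]
            refine ⟨rfl, rfl, rfl, ?_⟩
            simp only [abs_le]; push_cast; omega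
        · simp only [tP_apply, abs_le]; refine ⟨by ring, trivial, trivial, ?_⟩; push_cast; omega
        · simp only [tP_inv_apply, abs_le]; refine ⟨by ring, trivial, trivial, ?_⟩; push_cast; omega
        · simp only [abs_le]; refine ⟨trivial, trivial, trivial, ?_⟩; push_cast; omega)
      (ω := (l0 - p, e, 0)) (ω' := (l0, e, y)) (by simp)
    have e1 : mark x0 x1 (aP (ZMod (0 + 1)) ((0 : ℕ) : ℤ)) (tP _) w = 1 := h0
    rw [e1] at this
    simp only [Equiv.Perm.one_apply] at this
    obtain ⟨h1, h2, h3, -⟩ := this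
    exact Prod.ext (by rw [sub_add_cancel] at h1; exact h1) (Prod.ext h2 (by rw [add_sub_cancel_right] at h3; exact h3))

end conc

section NDs
variable {ι : Type*} [DecidableEq ι]

/-- the intersection of the kernels of the actions with parameters in `D`. -/
def ND (x0 x1 : ι) (D : Set (ℕ × ℕ)) : Subgroup (FreeGroup ι) := ⨅ d ∈ D, (rho x0 x1 d).ker

theorem mem_ND (x0 x1 : ι) (D : Set (ℕ × ℕ)) (w : FreeGroup ι) :
    w ∈ ND x0 x1 D ↔ ∀ d ∈ D, rho x0 x1 d w = 1 := by
  simp [ND, Subgroup.mem_iInf, MonoidHom.mem_ker]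

theorem ND_normal (x0 x1 : ι) (D : Set (ℕ × ℕ)) : (ND x0 x1 D).Normal := by
  constructor
  intro n hn g
  rw [mem_ND] at hn ⊢
  intro d hd
  rw [map_mul, map_mul, hn d hd]; simp

/-- The components of the total action. -/
abbrev OmD (D : Finset (ℕ × ℕ)) : Type := Σ d : {d // d ∈ D}, ℤ × Bool × ZMod (d.1.2 + 1)

/-- total action of `a`. -/
def aD (D : Finset (ℕ × ℕ)) : Equiv.Perm (OmD D) :=
  Equiv.Perm.sigmaCongrRightHom _ (fun d => aP _ (d.1.1 : ℤ))

/-- total action of `t`. -/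
def tD (D : Finset (ℕ × ℕ)) : Equiv.Perm (OmD D) :=
  Equiv.Perm.sigmaCongrRightHom _ (fun _ => tP _)

theorem mark_D (x0 x1 : ι) (D : Finset (ℕ × ℕ)) (w : FreeGroup ι) :
    mark x0 x1 (aD D) (tD D) w = 1 ↔ w ∈ ND x0 x1 (D : Set (ℕ × ℕ)) := by
  unfold aD tD
  rw [← map_mark, map_eq_one_iff _ Equiv.Perm.sigmaCongrRightHom_injective, mem_ND, funext_iff]
  have key : ∀ d : {d // d ∈ D}, mark x0 x1 (fun d : {d // d ∈ D} => aP (ZMod (d.1.2 + 1)) (d.1.1 : ℤ))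
      (fun _ => tP _) w d = rho x0 x1 d.1 w := fun d =>
    map_mark x0 x1 (fun d : {d // d ∈ D} => aP (ZMod (d.1.2 + 1)) (d.1.1 : ℤ))
      (fun _ => tP _) (Pi.evalMonoidHom _ d) w
  constructor
  · intro h d hd
    exact (key ⟨d, hd⟩).symm.trans (h ⟨d, hd⟩)
  · intro h d
    exact (key d).trans (h d.1 d.2)

theorem aD_apply (D : Finset (ℕ × ℕ)) (d : {d // d ∈ D}) (x : ℤ × Bool × ZMod (d.1.2 + 1)) :
    aD D ⟨d, x⟩ = ⟨d, aP _ (d.1.1 : ℤ) x⟩ := rfl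

theorem good_D (D : Finset (ℕ × ℕ)) (h0 : (0, 0) ∈ D) :
    ∃ R, Good (fun ω : OmD D => ω.2.1) (tD D) (aD D) R {ω | ω.1.1 = (0, 0)} := by
  refine ⟨D.sup Prod.fst, ?_, ?_, ?_, ?_, ?_, ?_, ?_, ?_, ?_⟩
  · intro ω; rfl
  · rintro ⟨d, l, e, y⟩
    change (aP _ (d.1.1 : ℤ) (l, e, y)).1 = l
    rw [aP_apply]; split_ifs <;> rfl
  · rintro ⟨d, l, e, y⟩ hl
    have hR : d.1.1 ≤ D.sup Prod.fst := Finset.le_sup (f := Prod.fst) d.2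
    simp only [lt_abs] at hl
    rw [aD_apply, aP_apply, if_neg (by omega), if_neg (by omega)]
  · intro l
    have : ∀ d : {d // d ∈ D}, Finite (ZMod (d.1.2 + 1)) := fun d => inferInstance
    have h1 : (⋃ d : {d // d ∈ D}, (Sigma.mk d : _ → OmD D) ''
      ((Set.Icc (-l) l) ×ˢ (Set.univ : Set (Bool × ZMod (d.1.2 + 1))))).Finite :=
      Set.finite_iUnion (fun d => ((Set.finite_Icc _ _).prod Set.finite_univ).image _)
    refine h1.subset ?_
    rintro ⟨d, l', x⟩ h
    refine Set.mem_iUnion.2 ⟨d, (l', x), ⟨?_, trivial⟩, rfl⟩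
    exact abs_le.1 h
  · exact ⟨⟨⟨(0, 0), h0⟩, 0, true, 0⟩, rfl, rfl⟩
  · intro ω; rfl
  · intro ω; rfl
  · rintro ⟨⟨d, hd⟩, l, e, y⟩ h hl
    change d = (0, 0) at h
    subst h
    have : l ≠ 0 := hl
    rw [aD_apply, aP_apply, if_neg this, if_neg (by simpa using this)]
  · rintro ⟨⟨d, hd⟩, l, e, y⟩ h hl
    change d = (0, 0) at h
    subst h
    have : l = 0 := hl
    rw [aD_apply, aP_apply, if_pos this]
    simp

theorem key_D {x0 x1 : ι} (hx : x0 ≠ x1) (D : Finset (ℕ × ℕ)) (L : ℕ) :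
    ∃ (K : Subgroup (FreeGroup ι)) (_ : K.Normal) (B : ℕ),
      K ≤ ND x0 x1 (insert (0, 0) D : Finset (ℕ × ℕ)) ∧
      (∀ w, wnorm w ≤ L → w ∈ ND x0 x1 (insert (0, 0) D : Finset (ℕ × ℕ)) → w ∈ K) ∧
      (∀ w ∈ K, AreaLe {r | wnorm r ≤ B ∧ r ∈ K} w (wnorm w)) ∧
      IsHyperbolic (QuotientGroup.mk' K) ∧
      (¬ ∃ g : FreeGroup ι ⧸ K, (Subgroup.zpowers g).index ≠ 0) ∧
      (∀ S : Subgroup (FreeGroup ι ⧸ K), S.Normal →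
          (S : Set (FreeGroup ι ⧸ K)).Finite → S = ⊥) := by
  obtain ⟨R, hR⟩ := good_D (insert (0, 0) D) (Finset.mem_insert_self _ _)
  obtain ⟨K, hK, B, h1, h2, h3⟩ := key hx hR L
  refine ⟨K, hK, B, ?_, ?_, h3⟩
  · intro w hw
    exact (mark_D x0 x1 _ w).1 (h1 hw)
  · intro w hw h
    exact h2 w hw ((mark_D x0 x1 _ w).2 h)

/-- locality for `ND` -/
theorem ND_local (x0 x1 : ι) (D D' : Set (ℕ × ℕ)) (w : FreeGroup ι) (h0 : (0, 0) ∈ D')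
    (h : ∀ d ∈ D, d ∈ D' ∨ 2 * wnorm w < d.1) (hw : w ∈ ND x0 x1 D') : w ∈ ND x0 x1 D := by
  rw [mem_ND] at hw ⊢
  intro d hd
  rcases h d hd with h1 | h1
  · exact hw d h1
  · exact local_lemma x0 x1 d w h1 (hw _ h0)

end NDs
end IsoSpecPaper

namespace IsoSpecPaper

section theta

/-- The state space of the Heisenberg-type action (without level). -/
abbrev HS : Type := Bool × ℤ × Bool × ℤ × ℤ

/-- The generator `a` acting on the Heisenberg-type space. -/
def hFun (p : ℤ) (ω : ℤ × HS) : ℤ × HS :=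
  match ω with
  | (l, e, x, e', y, z) =>
    if l = 0 then (l, !e, x, e', y, z) else
    if l = p then (l, !e, x + sg e, e', y, z) else
    if l = 1 then (l, e, x, !e', y, z) else
    if l = p + 1 then (l, e, x, !e', y + sg e', z + x * sg e') else (l, e, x, e', y, z)

theorem hFun_inv (p : ℤ) : Involutive (hFun p) := by
  rintro ⟨l, e, x, e', y, z⟩
  by_cases h : l = 0
  · simp [hFun, h]
  by_cases h1 : l = p
  · subst h1; simp [hFun, h, sg_not]
  by_cases h2 : l = 1
  · simp only [hFun, if_neg h, if_neg h1, if_pos h2, Bool.not_not]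
  by_cases h3 : l = p + 1
  · simp only [hFun, if_neg h, if_neg h1, if_neg h2, if_pos h3, Bool.not_not, sg_not]
    simp
  · simp only [hFun, if_neg h, if_neg h1, if_neg h2, if_neg h3]

/-- `a` as a permutation -/
def hP (p : ℤ) : Equiv.Perm (ℤ × HS) := (hFun_inv p).toPerm

theorem hP_apply (p l : ℤ) (e : Bool) (x : ℤ) (e' : Bool) (y z : ℤ) :
    hP p (l, e, x, e', y, z) =
    if l = 0 then (l, !e, x, e', y, z) else
    if l = p then (l, !e, x + sg e, e', y, z) else
    if l = 1 then (l, e, x, !e', y, z) else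
    if l = p + 1 then (l, e, x, !e', y + sg e', z + x * sg e') else (l, e, x, e', y, z) := rfl

theorem hP_invol (p : ℤ) : Involutive (hP p) := hFun_inv p

variable {ι : Type*} [DecidableEq ι]

/-- The Heisenberg-type action. -/
def theta (x0 x1 : ι) (p : ℤ) : FreeGroup ι →* Equiv.Perm (ℤ × HS) :=
  mark x0 x1 (hP p) (tP _)

theorem sg_abs (e : Bool) : |(sg e : ℤ)| ≤ 1 := by cases e <;> simp [sg]

theorem sg_cast {Z : Type*} [CommRing Z] (e : Bool) : ((sg e : ℤ) : Z) = sg e := by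
  cases e <;> simp [sg]

theorem theta_X (x0 x1 : ι) (p M : ℕ) (hp : 3 ≤ p) (w : FreeGroup ι) (l : ℤ) (e : Bool) (x : ℤ)
    (e' : Bool) (y z : ℤ) :
    rho x0 x1 (p, M) w (l, e, (x : ZMod (M + 1))) = ((theta x0 x1 p w (l, e, x, e', y, z)).1,
      (theta x0 x1 p w (l, e, x, e', y, z)).2.1, (((theta x0 x1 p w (l, e, x, e', y, z)).2.2.1 : ℤ) : ZMod (M + 1))) := by
  refine mark_rel x0 x1 (hP_invol p) (aP_invol (Z := ZMod (M + 1)) (p : ℤ)) (T := tP _) (T' := tP _)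
    (fun _ ω ω' => ω' = (ω.1, ω.2.1, (ω.2.2.1 : ZMod (M + 1)))) w ?_ rfl
  rintro n - ⟨l, e, x, e', y, z⟩ ω' rfl
  refine ⟨?_, rfl, rfl, rfl⟩
  simp only [hP_apply, aP_apply]
  by_cases h : l = 0
  · simp [h]
  by_cases h1 : l = p
  · subst h1; simp [show p ≠ 0 by omega, sg_cast]
  rw [if_neg h, if_neg h1, if_neg h, if_neg h1]
  split_ifs <;> rfl

theorem theta_Y (x0 x1 : ι) (p M : ℕ) (hp : 3 ≤ p) (w : FreeGroup ι) (l : ℤ) (e : Bool) (x : ℤ)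
    (e' : Bool) (y z : ℤ) :
    rho x0 x1 (p, M) w (l - 1, e', (y : ZMod (M + 1))) = ((theta x0 x1 p w (l, e, x, e', y, z)).1 - 1,
      (theta x0 x1 p w (l, e, x, e', y, z)).2.2.2.1,
      (((theta x0 x1 p w (l, e, x, e', y, z)).2.2.2.2.1 : ℤ) : ZMod (M + 1))) := by
  refine mark_rel x0 x1 (hP_invol p) (aP_invol (Z := ZMod (M + 1)) (p : ℤ)) (T := tP _) (T' := tP _)
    (fun _ ω ω' => ω' = (ω.1 - 1, ω.2.2.2.1, (ω.2.2.2.2.1 : ZMod (M + 1)))) w ?_ rfl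
  rintro n - ⟨l, e, x, e', y, z⟩ ω' rfl
  refine ⟨?_, ?_, rfl, rfl⟩
  · simp only [hP_apply, aP_apply]
    by_cases h2 : l = 1
    · have : (1 : ℤ) ≠ p := by omega
      simp [h2, this]
    by_cases h3 : l = p + 1
    · have : (p : ℤ) + 1 ≠ 0 := by omega
      have h4 : p ≠ 0 := by omega
      simp [h3, sg_cast, this, h4]
    rw [if_neg (show l - 1 ≠ 0 by omega), if_neg (show l - 1 ≠ p by omega), if_neg h2, if_neg h3]
    split_ifs <;> rfl
  · simp only [tP_apply]; congr 1; ring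

theorem theta_growth (x0 x1 : ι) (p : ℤ) (w : FreeGroup ι) (l0 : ℤ) (e0 : Bool) (a : ℤ)
    (e0' : Bool) (b c : ℤ) (W : ℤ × HS) (hW : theta x0 x1 p w (l0, e0, a, e0', b, c) = W) :
    |W.2.2.1 - a| ≤ wnorm w ∧ |W.2.2.2.2.1 - b| ≤ wnorm w ∧
    |W.2.2.2.2.2 - c - a * (W.2.2.2.2.1 - b)| ≤ (wnorm w : ℤ) ^ 2 := by
  subst hW
  refine mark_rel x0 x1 (hP_invol p) (hP_invol p) (T := tP _) (T' := tP _)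
    (fun n W _ => |W.2.2.1 - a| ≤ n ∧ |W.2.2.2.2.1 - b| ≤ n ∧
    |W.2.2.2.2.2 - c - a * (W.2.2.2.2.1 - b)| ≤ (n : ℤ) ^ 2) w ?_
    (ω' := (l0, e0, a, e0', b, c)) (by simp)
  rintro n - ⟨l, e, x, e', y, z⟩ - ⟨h1, h2, h3⟩
  simp only at h1 h2 h3
  have e1 : |x - a| ≤ ((n + 1 : ℕ) : ℤ) := h1.trans (by push_cast; omega)
  have e2 : |y - b| ≤ ((n + 1 : ℕ) : ℤ) := h2.trans (by push_cast; omega)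
  have e3 : |z - c - a * (y - b)| ≤ ((n + 1 : ℕ) : ℤ) ^ 2 := h3.trans (by push_cast; nlinarith)
  refine ⟨?_, ⟨e1, e2, e3⟩, ⟨e1, e2, e3⟩, ⟨e1, e2, e3⟩⟩
  rw [hP_apply]
  split_ifs
  · exact ⟨e1, e2, e3⟩
  · refine ⟨?_, e2, e3⟩
    have := sg_abs e
    simp only [abs_le] at this h1 ⊢
    push_cast; omega
  · exact ⟨e1, e2, e3⟩
  · refine ⟨e1, ?_, ?_⟩
    · have := sg_abs e'
      simp only [abs_le] at this h2 ⊢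
      push_cast; omega
    · simp only [abs_le] at h1 h3 ⊢
      push_cast
      cases e' <;> simp only [sg, cond_true, cond_false] <;> constructor <;> nlinarith
  · exact ⟨e1, e2, e3⟩

/-- shift of the central coordinate. -/
def zs (c : ℤ) (ω : ℤ × HS) : ℤ × HS :=
  (ω.1, ω.2.1, ω.2.2.1, ω.2.2.2.1, ω.2.2.2.2.1, ω.2.2.2.2.2 + c)

theorem theta_zs (x0 x1 : ι) (p : ℤ) (w : FreeGroup ι) (c : ℤ) (ω : ℤ × HS) :
    theta x0 x1 p w (zs c ω) = zs c (theta x0 x1 p w ω) := by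
  refine mark_rel x0 x1 (hP_invol p) (hP_invol p) (T := tP _) (T' := tP _)
    (fun n ω ω' => ω' = zs c ω) w ?_ rfl
  rintro n - ⟨l, e, x, e', y, z⟩ ω' rfl
  refine ⟨?_, rfl, rfl, rfl⟩
  simp only [zs, hP_apply]
  split_ifs <;> try rfl
  simp only [Prod.mk.injEq, true_and]; ring

theorem eq_of_cast {M : ℕ} {a b : ℤ} {m : ℕ} (hm : m ≤ M) (h : |a - b| ≤ m)
    (h1 : (a : ZMod (M + 1)) = b) : a = b := by
  rw [← sub_eq_zero, ← Int.cast_sub, ZMod.intCast_zmod_eq_zero_iff_dvd] at h1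
  have := Int.eq_zero_of_abs_lt_dvd h1 (by push_cast; omega)
  omega

theorem theta_triv (x0 x1 : ι) (p M m : ℕ) (hp : 3 ≤ p) (hm : m ≤ M) (r : FreeGroup ι)
    (hr : wnorm r ≤ m) (h : rho x0 x1 (p, M) r = 1) (ω : ℤ × HS) :
    ∃ c : ℤ, |c| ≤ (m : ℤ) ^ 2 ∧ theta x0 x1 p r ω = zs c ω := by
  obtain ⟨l, e, x, e', y, z⟩ := ω
  have h1 := theta_X x0 x1 p M hp r l e x e' y z
  have h2 := theta_Y x0 x1 p M hp r l e x e' y z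
  rcases hW : theta x0 x1 p r (l, e, x, e', y, z) with ⟨l1, e1, x1', e1', y1, z1⟩
  obtain ⟨g1, g2, g3⟩ := theta_growth x0 x1 p r l e x e' y z _ hW
  rw [h, hW] at h1 h2
  simp only [Equiv.Perm.one_apply, Prod.mk.injEq] at h1 h2 g1 g2 g3
  obtain ⟨rfl, rfl, h13⟩ := h1
  obtain ⟨-, rfl, h23⟩ := h2
  have hx : x1' = x := eq_of_cast (m := m) hm (g1.trans (by exact_mod_cast hr)) h13.symm
  have hy : y1 = y := eq_of_cast (m := m) hm (g2.trans (by exact_mod_cast hr)) h23.symm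
  subst hx hy
  refine ⟨z1 - z, ?_, ?_⟩
  · rw [sub_self, mul_zero, sub_zero] at g3
    refine g3.trans ?_
    have : (wnorm r : ℤ) ≤ m := by exact_mod_cast hr
    gcongr
  · simp [zs]

theorem theta_area (x0 x1 : ι) (p M m : ℕ) (hp : 3 ≤ p) (hm : m ≤ M) (R : Set (FreeGroup ι))
    (hR : ∀ r ∈ R, wnorm r ≤ m ∧ rho x0 x1 (p, M) r = 1) (w : FreeGroup ι) (k : ℕ)
    (h : AreaLe R w k) (ω : ℤ × HS) :
    ∃ c : ℤ, |c| ≤ k * (m : ℤ) ^ 2 ∧ theta x0 x1 p w ω = zs c ω := by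
  obtain ⟨L, h1, h2, rfl⟩ := h
  induction L generalizing k with
  | nil => subst h1; exact ⟨0, by simp, by simp [zs]⟩
  | cons q L ih =>
    subst h1
    obtain ⟨c, hc, hc'⟩ := ih L.length rfl (fun p hp => h2 p (List.mem_cons_of_mem _ hp))
    obtain ⟨g, r⟩ := q
    have hr : wnorm r ≤ m ∧ rho x0 x1 (p, M) r = 1 := by
      rcases h2 _ List.mem_cons_self with h3 | h3
      · exact hR _ h3
      · have := hR _ h3
        rwa [wnorm_inv, map_inv, inv_eq_one] at this
    obtain ⟨d, hd, hd'⟩ := theta_triv x0 x1 p M m hp hm r hr.1 hr.2 (theta x0 x1 p g ω)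
    refine ⟨d + c, ?_, ?_⟩
    · refine (abs_add_le _ _).trans ?_
      rw [List.length_cons]; push_cast; linarith
    · rw [List.map_cons, List.prod_cons, map_mul, Equiv.Perm.mul_apply, hc', theta_zs]
      have : theta x0 x1 p (g⁻¹ * r * g) ω = zs d ω := by
        rw [map_mul, map_mul, Equiv.Perm.mul_apply, Equiv.Perm.mul_apply, hd', theta_zs, map_inv,
          ← Equiv.Perm.mul_apply, inv_mul_cancel, Equiv.Perm.one_apply]
      rw [this]
      simp [zs, add_assoc]

/-- The word `u`. -/
def uw (x0 x1 : ι) (p : ℕ) : FreeGroup ι :=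
  FreeGroup.of x0 * ((FreeGroup.of x1 ^ p)⁻¹ * FreeGroup.of x0 * FreeGroup.of x1 ^ p)

/-- The word `v`. -/
def vw (x0 x1 : ι) (p : ℕ) : FreeGroup ι :=
  (FreeGroup.of x1)⁻¹ * uw x0 x1 p * FreeGroup.of x1

theorem tP_pow (X : Type*) (n : ℕ) (l : ℤ) (x : X) : (tP X ^ n) (l, x) = (l + n, x) := by
  induction n with
  | zero => simp
  | succ n ih => rw [pow_succ', Equiv.Perm.mul_apply, ih, tP_apply]; push_cast; rw [add_assoc]

theorem tP_pow_inv (X : Type*) (n : ℕ) (l : ℤ) (x : X) : (tP X ^ n)⁻¹ (l, x) = (l - n, x) := by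
  rw [Equiv.Perm.inv_eq_iff_eq, tP_pow, sub_add_cancel]

theorem mark_uw {X : Type*} {x0 x1 : ι} (hx : x0 ≠ x1) (a : Equiv.Perm (ℤ × X)) (p : ℕ) (l : ℤ)
    (x : X) : mark x0 x1 a (tP X) (uw x0 x1 p) (l, x) = a ((tP X ^ p)⁻¹ (a (l + p, x))) := by
  simp only [uw, map_mul, map_inv, map_pow, mark_x0, mark_x1 hx, Equiv.Perm.mul_apply, tP_pow]

theorem mark_vw {X : Type*} {x0 x1 : ι} (hx : x0 ≠ x1) (a : Equiv.Perm (ℤ × X)) (p : ℕ) (l : ℤ)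
    (x : X) : mark x0 x1 a (tP X) (vw x0 x1 p) (l, x) =
      (tP X)⁻¹ (mark x0 x1 a (tP X) (uw x0 x1 p) (l + 1, x)) := by
  rw [vw, map_mul, map_mul, map_inv, mark_x1 hx, Equiv.Perm.mul_apply, Equiv.Perm.mul_apply,
    tP_apply]

theorem aP_other {Z : Type*} [CommRing Z] (p l : ℤ) (x : Bool × Z) (h0 : l ≠ 0) (h1 : l ≠ p) :
    aP Z p (l, x) = (l, x) := by
  obtain ⟨e, y⟩ := x
  rw [aP_apply, if_neg h0, if_neg h1]

theorem rho_uw {x0 x1 : ι} (hx : x0 ≠ x1) (d : ℕ × ℕ) (p : ℕ) (l : ℤ)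
    (x : Bool × ZMod (d.2 + 1)) (h0 : l ≠ 0) (h1 : l ≠ d.1) (h2 : l ≠ - p) (h3 : l ≠ d.1 - p) :
    rho x0 x1 d (uw x0 x1 p) (l, x) = (l, x) := by
  obtain ⟨e, y⟩ := x
  rw [rho, mark_uw hx, aP_other _ (l + p) _ (by omega) (by omega), tP_pow_inv,
    add_sub_cancel_right, aP_other _ l _ h0 h1]

theorem rho_vw {x0 x1 : ι} (hx : x0 ≠ x1) (d : ℕ × ℕ) (p : ℕ) (l : ℤ)
    (x : Bool × ZMod (d.2 + 1)) (h0 : l + 1 ≠ 0) (h1 : l + 1 ≠ d.1) (h2 : l + 1 ≠ - p)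
    (h3 : l + 1 ≠ d.1 - p) :
    rho x0 x1 d (vw x0 x1 p) (l, x) = (l, x) := by
  have := rho_uw hx d p (l + 1) x h0 h1 h2 h3
  rw [rho] at this
  rw [rho, mark_vw hx, this, tP_inv_apply, add_sub_cancel_right]

theorem rho_comm {x0 x1 : ι} (hx : x0 ≠ x1) (d : ℕ × ℕ) (p : ℕ) (hp : 3 ≤ p) (h1 : d.1 ≠ 1)
    (h2 : d.1 ≠ p + 1) (h3 : p ≠ d.1 + 1) :
    rho x0 x1 d (uw x0 x1 p * vw x0 x1 p * (uw x0 x1 p)⁻¹ * (vw x0 x1 p)⁻¹) = 1 := by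
  have : Commute (rho x0 x1 d (uw x0 x1 p)) (rho x0 x1 d (vw x0 x1 p)) := by
    apply Equiv.Perm.Disjoint.commute
    rintro ⟨l, x⟩
    by_cases h : l ≠ 0 ∧ l ≠ d.1 ∧ l ≠ - p ∧ l ≠ d.1 - p
    · exact Or.inl (rho_uw hx d p l x h.1 h.2.1 h.2.2.1 h.2.2.2)
    · exact Or.inr (rho_vw hx d p l x (by omega) (by omega) (by omega) (by omega))
  rw [map_mul, map_mul, map_mul, map_inv, map_inv, this.eq]
  group

theorem theta_uw {x0 x1 : ι} (hx : x0 ≠ x1) (p : ℕ) (hp : 3 ≤ p) (x y z : ℤ) :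
    theta x0 x1 p (uw x0 x1 p) (0, true, x, true, y, z) = (0, true, x + 1, true, y, z) := by
  have h1 : hP p (0 + p, true, x, true, y, z) = ((0 : ℤ) + p, false, x + 1, true, y, z) := by
    rw [hP_apply, if_neg (by omega), if_pos (by omega)]; rfl
  rw [theta, mark_uw hx, h1, tP_pow_inv, add_sub_cancel_right]
  rfl

theorem theta_vw {x0 x1 : ι} (hx : x0 ≠ x1) (p : ℕ) (hp : 3 ≤ p) (x y z : ℤ) :
    theta x0 x1 p (vw x0 x1 p) (0, true, x, true, y, z) = (0, true, x, true, y + 1, z + x) := by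
  have h1 : hP p (0 + 1 + p, true, x, true, y, z) = ((0 : ℤ) + 1 + p, true, x, false, y + 1, z + x) := by
    rw [hP_apply, if_neg (by omega), if_neg (by omega), if_neg (by omega), if_pos (by omega)]
    simp [sg]
  have h2 : hP p (0 + 1, true, x, false, y + 1, z + x) = ((0 : ℤ) + 1, true, x, true, y + 1, z + x) := by
    rw [hP_apply, if_neg (by omega), if_neg (by omega), if_pos (by omega)]; rfl
  rw [theta, mark_vw hx, mark_uw hx, h1, tP_pow_inv, add_sub_cancel_right, h2, tP_inv_apply,
    add_sub_cancel_right]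

theorem theta_uw_pow {x0 x1 : ι} (hx : x0 ≠ x1) (p : ℕ) (hp : 3 ≤ p) (n : ℕ) (x y z : ℤ) :
    theta x0 x1 p (uw x0 x1 p ^ n) (0, true, x, true, y, z) = (0, true, x + n, true, y, z) := by
  induction n with
  | zero => simp
  | succ n ih =>
    rw [pow_succ', map_mul, Equiv.Perm.mul_apply, ih, theta_uw hx p hp]; push_cast; rw [add_assoc]

theorem theta_vw_pow {x0 x1 : ι} (hx : x0 ≠ x1) (p : ℕ) (hp : 3 ≤ p) (n : ℕ) (x y z : ℤ) :
    theta x0 x1 p (vw x0 x1 p ^ n) (0, true, x, true, y, z) =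
      (0, true, x, true, y + n, z + n * x) := by
  induction n with
  | zero => simp
  | succ n ih =>
    rw [pow_succ', map_mul, Equiv.Perm.mul_apply, ih, theta_vw hx p hp]; push_cast
    rw [add_assoc, add_assoc, add_mul, one_mul]

/-- The test words. -/
def ww (x0 x1 : ι) (p n : ℕ) : FreeGroup ι :=
  uw x0 x1 p ^ n * vw x0 x1 p ^ n * (uw x0 x1 p ^ n)⁻¹ * (vw x0 x1 p ^ n)⁻¹

theorem theta_ww {x0 x1 : ι} (hx : x0 ≠ x1) (p : ℕ) (hp : 3 ≤ p) (n : ℕ) :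
    theta x0 x1 p (ww x0 x1 p n) (0, true, n, true, n, n * n) =
      (0, true, (n : ℤ), true, (n : ℤ), 0) := by
  have h1 : theta x0 x1 p (vw x0 x1 p ^ n)⁻¹ (0, true, n, true, n, n * n) =
      (0, true, (n : ℤ), true, 0, 0) := by
    rw [map_inv, Equiv.Perm.inv_eq_iff_eq, theta_vw_pow hx p hp]; simp
  have h2 : theta x0 x1 p (uw x0 x1 p ^ n)⁻¹ (0, true, n, true, 0, 0) =
      (0, true, 0, true, 0, 0) := by
    rw [map_inv, Equiv.Perm.inv_eq_iff_eq, theta_uw_pow hx p hp]; simp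
  rw [ww, map_mul, map_mul, map_mul, Equiv.Perm.mul_apply, Equiv.Perm.mul_apply,
    Equiv.Perm.mul_apply, h1, h2, theta_vw_pow hx p hp, theta_uw_pow hx p hp]
  simp

theorem wnorm_pow_le (x : FreeGroup ι) (n : ℕ) : wnorm (x ^ n) ≤ n * wnorm x := by
  induction n with
  | zero => simp [wnorm_one]
  | succ n ih =>
    rw [pow_succ]; refine (wnorm_mul_le _ _).trans ?_
    rw [add_mul, one_mul]; omega

theorem wnorm_comm_le (x y : FreeGroup ι) :
    wnorm (x * y * x⁻¹ * y⁻¹) ≤ 2 * wnorm x + 2 * wnorm y := by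
  have h1 := wnorm_mul_le (x * y * x⁻¹) y⁻¹
  have h2 := wnorm_mul3 x y x⁻¹
  rw [wnorm_inv] at h1 h2
  omega

theorem wnorm_uw (x0 x1 : ι) (p : ℕ) : wnorm (uw x0 x1 p) ≤ 2 * p + 2 := by
  have h1 := wnorm_mul_le (FreeGroup.of x0)
    ((FreeGroup.of x1 ^ p)⁻¹ * FreeGroup.of x0 * FreeGroup.of x1 ^ p)
  have h2 := wnorm_mul3 (FreeGroup.of x1 ^ p)⁻¹ (FreeGroup.of x0) (FreeGroup.of x1 ^ p)
  have h3 := wnorm_pow_le (FreeGroup.of x1) p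
  rw [wnorm_of] at h1 h2 h3
  rw [wnorm_inv] at h2
  unfold uw
  omega

theorem wnorm_vw (x0 x1 : ι) (p : ℕ) : wnorm (vw x0 x1 p) ≤ 2 * p + 4 := by
  have h2 := wnorm_mul3 (FreeGroup.of x1)⁻¹ (uw x0 x1 p) (FreeGroup.of x1)
  have h3 := wnorm_uw x0 x1 p
  rw [wnorm_inv, wnorm_of] at h2
  unfold vw
  omega

theorem wnorm_comm (x0 x1 : ι) (p : ℕ) :
    wnorm (uw x0 x1 p * vw x0 x1 p * (uw x0 x1 p)⁻¹ * (vw x0 x1 p)⁻¹) ≤ 8 * p + 16 := by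
  have := wnorm_comm_le (uw x0 x1 p) (vw x0 x1 p)
  have h3 := wnorm_uw x0 x1 p
  have h4 := wnorm_vw x0 x1 p
  omega

theorem wnorm_ww (x0 x1 : ι) (p n : ℕ) : wnorm (ww x0 x1 p n) ≤ n * (8 * p + 16) := by
  have := wnorm_comm_le (uw x0 x1 p ^ n) (vw x0 x1 p ^ n)
  have h3 := wnorm_uw x0 x1 p
  have h4 := wnorm_vw x0 x1 p
  have h5 := wnorm_pow_le (uw x0 x1 p) n
  have h6 := wnorm_pow_le (vw x0 x1 p) n
  unfold ww
  nlinarith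

theorem ww_mem (x0 x1 : ι) (p n : ℕ) (R : Set (FreeGroup ι))
    (h : uw x0 x1 p * vw x0 x1 p * (uw x0 x1 p)⁻¹ * (vw x0 x1 p)⁻¹ ∈ R) :
    ww x0 x1 p n ∈ Subgroup.normalClosure R := by
  have h1 := Subgroup.subset_normalClosure h
  rw [SetLike.mem_coe] at h1
  rw [← QuotientGroup.eq_one_iff] at h1 ⊢
  have h2 : Commute (uw x0 x1 p : FreeGroup ι ⧸ Subgroup.normalClosure R) (vw x0 x1 p) := by
    have h3 : ((uw x0 x1 p : FreeGroup ι ⧸ Subgroup.normalClosure R)) * (vw x0 x1 p) *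
      (uw x0 x1 p : FreeGroup ι ⧸ Subgroup.normalClosure R)⁻¹ *
      (vw x0 x1 p : FreeGroup ι ⧸ Subgroup.normalClosure R)⁻¹ = 1 := h1
    rw [mul_inv_eq_one, mul_inv_eq_iff_eq_mul] at h3
    exact h3
  have h4 := h2.pow_pow n n
  change (uw x0 x1 p : FreeGroup ι ⧸ Subgroup.normalClosure R) ^ n *
    (vw x0 x1 p : FreeGroup ι ⧸ Subgroup.normalClosure R) ^ n *
    ((uw x0 x1 p : FreeGroup ι ⧸ Subgroup.normalClosure R) ^ n)⁻¹ *
    ((vw x0 x1 p : FreeGroup ι ⧸ Subgroup.normalClosure R) ^ n)⁻¹ = 1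
  rw [h4.eq]; group

theorem exists_area (R : Set (FreeGroup ι)) (w : FreeGroup ι)
    (h : w ∈ Subgroup.normalClosure R) : ∃ l, AreaLe R w l := by
  refine Subgroup.closure_induction (p := fun w _ => ∃ l, AreaLe R w l) ?_ ?_ ?_ ?_ h
  · intro x hx
    rw [Group.mem_conjugatesOfSet_iff] at hx
    obtain ⟨r, hr, hc⟩ := hx
    obtain ⟨c, hc⟩ := isConj_iff.1 hc
    refine ⟨1, [(c⁻¹, r)], rfl, ?_, ?_⟩
    · simpa using Or.inl hr
    · simp [hc]
  · exact ⟨0, [], rfl, by simp, by simp⟩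
  · rintro x y - - ⟨k, hk⟩ ⟨l, hl⟩
    exact ⟨_, hk.append hl⟩
  · rintro x - ⟨k, L, h1, h2, rfl⟩
    refine ⟨k, (L.map (fun p => (p.1, p.2⁻¹))).reverse, by simp [h1], ?_, ?_⟩
    · intro p hp
      simp only [List.mem_reverse, List.mem_map] at hp
      obtain ⟨q, hq, rfl⟩ := hp
      simpa using (h2 q hq).symm
    · rw [List.prod_inv_reverse, List.map_reverse, List.map_map, List.map_map]
      congr 3
      ext p
      simp [mul_assoc]

theorem area_spec (R : Set (FreeGroup ι)) (w : FreeGroup ι)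
    (h : w ∈ Subgroup.normalClosure R) : AreaLe R w (area R w) :=
  Nat.sInf_mem (exists_area R w h)

theorem finite_ball [Finite ι] (n : ℕ) : {w : FreeGroup ι | wnorm w ≤ n}.Finite := by
  refine ((List.finite_length_le (ι × Bool) n).image FreeGroup.mk).subset ?_
  intro w hw
  exact ⟨wd w, by simpa [wd_length] using hw, mk_wd w⟩

theorem le_isoSpec [Finite ι] {G : Type*} [Group G] (φ : FreeGroup ι →* G) (k m n : ℕ)
    (w : FreeGroup ι) (h : w ∈ Subgroup.normalClosure (triv φ k)) (hn : wnorm w ≤ n) :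
    area (triv φ m) w ≤ isoSpec φ k m n := by
  refine le_csSup ?_ ⟨w, ⟨h, hn⟩, rfl⟩
  exact (((finite_ball n).subset (fun w hw => hw.2)).image _).bddAbove

theorem isoSpec_lower [Finite ι] {x0 x1 : ι} (hx : x0 ≠ x1) (N : Subgroup (FreeGroup ι)) [N.Normal]
    (p M : ℕ) (hp : 3 ≤ p) (hN : N ≤ (rho x0 x1 (p, M)).ker)
    (hc : uw x0 x1 p * vw x0 x1 p * (uw x0 x1 p)⁻¹ * (vw x0 x1 p)⁻¹ ∈ N) (m : ℕ)
    (hk : 8 * p + 16 ≤ m) (hm : m ≤ M) (n : ℕ) :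
    n * n ≤ isoSpec (QuotientGroup.mk' N) (8 * p + 16) m (n * (8 * p + 16)) * m ^ 2 := by
  have mem : ∀ k, 8 * p + 16 ≤ k → ww x0 x1 p n ∈
      Subgroup.normalClosure (triv (QuotientGroup.mk' N) k) := by
    intro k hk
    apply ww_mem
    exact ⟨(wnorm_comm _ _ _).trans hk, by
      rw [QuotientGroup.mk'_apply, QuotientGroup.eq_one_iff]; exact hc⟩
  have h1 := le_isoSpec (QuotientGroup.mk' N) (8 * p + 16) m (n * (8 * p + 16)) _ (mem _ le_rfl)
    (wnorm_ww x0 x1 p n)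
  obtain ⟨c, hc, hc'⟩ := theta_area x0 x1 p M m hp hm (triv (QuotientGroup.mk' N) m) (by
    rintro r ⟨h2, h3⟩
    refine ⟨h2, ?_⟩
    rw [QuotientGroup.mk'_apply, QuotientGroup.eq_one_iff] at h3
    exact hN h3) _ _ (area_spec _ _ (mem m hk)) (0, true, n, true, n, n * n)
  rw [theta_ww hx p hp] at hc'
  simp only [zs, Prod.mk.injEq, true_and] at hc'
  have h3 : c = -(n * n) := by omega
  rw [h3, abs_neg, abs_of_nonneg (by positivity)] at hc
  have h4 : n * n ≤ area (triv (QuotientGroup.mk' N) m) (ww x0 x1 p n) * m ^ 2 := by exact_mod_cast hc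
  exact h4.trans (Nat.mul_le_mul_right _ h1)

end theta
end IsoSpecPaper

namespace IsoSpecPaper

section upper
variable {ι : Type*} [DecidableEq ι]

theorem AreaLe.mono {R S : Set (FreeGroup ι)} (h : R ⊆ S) {w : FreeGroup ι} {k : ℕ}
    (hw : AreaLe R w k) : AreaLe S w k := by
  obtain ⟨L, h1, h2, h3⟩ := hw
  exact ⟨L, h1, fun p hp => (h2 p hp).imp (fun hh => h hh) (fun hh => h hh), h3⟩

/-- A bound for the length of the relators. -/
noncomputable def Bf {x0 x1 : ι} (hx : x0 ≠ x1) (D : Finset (ℕ × ℕ)) (L : ℕ) : ℕ :=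
  (key_D hx D L).choose_spec.choose_spec.choose

theorem Bf_spec {x0 x1 : ι} (hx : x0 ≠ x1) (D : Finset (ℕ × ℕ)) (L : ℕ) :
    ∃ K : Subgroup (FreeGroup ι),
      K ≤ ND x0 x1 (insert (0, 0) D : Finset (ℕ × ℕ)) ∧ K.Normal ∧
      (∀ w, wnorm w ≤ L → w ∈ ND x0 x1 (insert (0, 0) D : Finset (ℕ × ℕ)) → w ∈ K) ∧
      (∀ w ∈ K, AreaLe {r | wnorm r ≤ Bf hx D L ∧ r ∈ K} w (wnorm w)) := by
  have h := (key_D hx D L).choose_spec.choose_spec.choose_spec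
  exact ⟨(key_D hx D L).choose, h.1, (key_D hx D L).choose_spec.choose, h.2.1, h.2.2.1⟩

theorem ND_anti (x0 x1 : ι) {D D' : Set (ℕ × ℕ)} (h : D' ⊆ D) : ND x0 x1 D ≤ ND x0 x1 D' := by
  intro w hw
  rw [mem_ND] at hw ⊢
  exact fun d hd => hw d (h hd)

theorem isoSpec_upper {x0 x1 : ι} (hx : x0 ≠ x1) (D : Set (ℕ × ℕ)) [(ND x0 x1 D).Normal]
    (D' : Finset (ℕ × ℕ)) (L m k n : ℕ)
    (hk : k ≤ L) (hm : Bf hx D' L ≤ m) (h1 : ((insert (0, 0) D' : Finset (ℕ × ℕ)) : Set (ℕ × ℕ)) ⊆ D)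
    (h2 : ∀ d ∈ D, d ∈ insert (0, 0) D' ∨ 2 * Bf hx D' L < d.1) :
    isoSpec (QuotientGroup.mk' (ND x0 x1 D)) k m n ≤ n := by
  obtain ⟨K, hK, hKn, hK1, hK2⟩ := Bf_spec hx D' L
  apply csSup_le'
  rintro - ⟨w, ⟨hw, hn⟩, rfl⟩
  have hwK : w ∈ K := by
    refine Subgroup.normalClosure_le_normal ?_ hw
    rintro r ⟨hr, hr'⟩
    rw [QuotientGroup.mk'_apply, QuotientGroup.eq_one_iff] at hr'
    exact hK1 r (hr.trans hk) (ND_anti x0 x1 h1 hr')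
  refine (Nat.sInf_le ?_).trans hn
  refine (hK2 w hwK).mono ?_
  rintro r ⟨hr, hrK⟩
  refine ⟨hr.trans hm, ?_⟩
  rw [QuotientGroup.mk'_apply, QuotientGroup.eq_one_iff]
  refine ND_local x0 x1 D _ r (Finset.mem_coe.2 (Finset.mem_insert_self _ _)) ?_ (hK hrK)
  intro d hd
  rcases h2 d hd with h | h
  · exact Or.inl (Finset.mem_coe.2 h)
  · exact Or.inr (lt_of_le_of_lt (Nat.mul_le_mul_left _ hr) h)

end upper

section params

/-- The middle parameter. -/
def mmF (β : Finset (ℕ × ℕ) → ℕ → ℕ) (i : ℕ) (s : Finset (ℕ × ℕ) × ℕ) : ℕ :=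
  s.1.powerset.sup (fun D => β D (i * (8 * s.2 + 16))) + i * (8 * s.2 + 16) + (8 * s.2 + 16)

/-- The recursion for the parameters. -/
def st (β : Finset (ℕ × ℕ) → ℕ → ℕ) : ℕ → Finset (ℕ × ℕ) × ℕ
  | 0 => (∅, 3)
  | i + 1 => (insert ((st β i).2, (i + 1) * mmF β i (st β i)) (st β i).1,
      2 * ((i + 1) * mmF β i (st β i)) + 3)

variable (β : Finset (ℕ × ℕ) → ℕ → ℕ)

/-- `p_i` -/
def pp (i : ℕ) : ℕ := (st β i).2
/-- `m_i` -/
def mi (i : ℕ) : ℕ := mmF β i (st β i)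
/-- `(p_i, M_i)` -/
def pM (i : ℕ) : ℕ × ℕ := (pp β i, (i + 1) * mi β i)

theorem pp_succ (i : ℕ) : pp β (i + 1) = 2 * ((i + 1) * mi β i) + 3 := rfl

theorem mi_ge (i : ℕ) : 8 * pp β i + 16 ≤ mi β i := by unfold mi mmF pp; omega

theorem mi_ge' (i : ℕ) : i * (8 * pp β i + 16) ≤ mi β i := by unfold mi mmF pp; omega

theorem mi_ge_sup (i : ℕ) (D : Finset (ℕ × ℕ)) (h : D ⊆ (st β i).1) :
    β D (i * (8 * pp β i + 16)) ≤ mi β i := by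
  have := Finset.le_sup (f := fun D => β D (i * (8 * (st β i).2 + 16))) (Finset.mem_powerset.2 h)
  unfold mi mmF pp
  omega

theorem pp_lt (i : ℕ) : 2 * mi β i + 3 ≤ pp β (i + 1) := by
  rw [pp_succ]; nlinarith [Nat.zero_le (i * mi β i)]

theorem pp_mono : StrictMono (pp β) := by
  apply strictMono_nat_of_lt_succ
  intro i
  have := pp_lt β i
  have := mi_ge β i
  omega

theorem pp_ge (i : ℕ) : i + 3 ≤ pp β i := by
  induction i with
  | zero => exact le_rfl
  | succ i ih => have := pp_mono β (show i < i + 1 by omega); omega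

theorem pp_gap {i j : ℕ} (h : i < j) : 2 * mi β i + 3 ≤ pp β j :=
  (pp_lt β i).trans ((pp_mono β).monotone h)

theorem mem_st (i : ℕ) (d : ℕ × ℕ) : d ∈ (st β i).1 ↔ ∃ j < i, d = pM β j := by
  induction i with
  | zero => simp [st]
  | succ i ih =>
    rw [st, Finset.mem_insert, ih]
    constructor
    · rintro (h | ⟨j, hj, h⟩)
      · exact ⟨i, by omega, h⟩
      · exact ⟨j, by omega, h⟩
    · rintro ⟨j, hj, h⟩
      rcases Nat.lt_succ_iff_lt_or_eq.1 hj with h' | rfl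
      · exact Or.inr ⟨j, h', h⟩
      · exact Or.inl h

/-- The parameter set associated with `J`. -/
def DJ (J : Set ℕ) : Set (ℕ × ℕ) := insert (0, 0) (pM β '' J)

open Classical in
/-- The truncated parameter set. -/
noncomputable def DF (J : Set ℕ) (i : ℕ) : Finset (ℕ × ℕ) :=
  (st β i).1.filter (fun d => d ∈ pM β '' J)

open Classical in
theorem DF_sub (J : Set ℕ) (i : ℕ) : DF β J i ⊆ (st β i).1 := Finset.filter_subset _ _

open Classical in
theorem DF_sub' (J : Set ℕ) (i : ℕ) :
    ((insert (0, 0) (DF β J i) : Finset (ℕ × ℕ)) : Set (ℕ × ℕ)) ⊆ DJ β J := by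
  intro d hd
  rw [Finset.mem_coe, Finset.mem_insert] at hd
  rcases hd with rfl | hd
  · exact Or.inl rfl
  · exact Or.inr (Finset.mem_filter.1 hd).2

open Classical in
theorem DJ_cases (J : Set ℕ) (i : ℕ) (d : ℕ × ℕ) (hd : d ∈ DJ β J) :
    d ∈ insert (0, 0) (DF β J i) ∨ ∃ j ∈ J, i ≤ j ∧ d = pM β j := by
  rcases hd with rfl | ⟨j, hj, rfl⟩
  · exact Or.inl (Finset.mem_insert_self _ _)
  · by_cases h : i ≤ j
    · exact Or.inr ⟨j, hj, h, rfl⟩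
    · refine Or.inl (Finset.mem_insert_of_mem (Finset.mem_filter.2 ⟨?_, j, hj, rfl⟩))
      exact (mem_st β i _).2 ⟨j, by omega, rfl⟩

end params

section code

/-- Coding of subsets. -/
def code (I : Set ℕ) : Set ℕ :=
  {a | (∃ i ∈ I, ∃ j, a = 2 * Nat.pair i j) ∨ (∃ i ∉ I, ∃ j, a = 2 * Nat.pair i j + 1)}

theorem code_diff {I J : Set ℕ} (h : I ≠ J) (c : ℕ) : ∃ a ∈ code I, a ∉ code J ∧ c ≤ a := by
  have : ∃ x, ¬ (x ∈ I ↔ x ∈ J) := by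
    by_contra hc; push Not at hc; exact h (Set.ext hc)
  obtain ⟨x, hx⟩ := this
  have hc := Nat.right_le_pair x c
  by_cases hI : x ∈ I
  · have hJ : x ∉ J := fun h => hx ⟨fun _ => h, fun _ => hI⟩
    refine ⟨2 * Nat.pair x c, Or.inl ⟨x, hI, c, rfl⟩, ?_, by omega⟩
    rintro (⟨i, hi, j, e⟩ | ⟨i, hi, j, e⟩)
    · have e' : Nat.pair x c = Nat.pair i j := by omega
      rw [Nat.pair_eq_pair] at e'
      exact hJ (e'.1 ▸ hi)
    · omega
  · have hJ : x ∈ J := by by_contra h; exact hx ⟨fun h' => absurd h' hI, fun h' => absurd h' h⟩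
    refine ⟨2 * Nat.pair x c + 1, Or.inr ⟨x, hI, c, rfl⟩, ?_, by omega⟩
    rintro (⟨i, hi, j, e⟩ | ⟨i, hi, j, e⟩)
    · omega
    · have e' : Nat.pair x c = Nat.pair i j := by omega
      rw [Nat.pair_eq_pair] at e'
      exact hi (e'.1 ▸ hJ)

end code

section final
variable {n : ℕ}

/-- The marked groups of the antichain. -/
noncomputable def fJ {x0 x1 : Fin n} (hx : x0 ≠ x1) (J : Set ℕ) : MarkedGroup n :=
  ⟨ND x0 x1 (DJ (Bf hx) J), ND_normal _ _ _⟩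

theorem fJ_closure {x0 x1 : Fin n} (hx : x0 ≠ x1) (J : Set ℕ) : fJ hx J ∈ closure (Hset n) := by
  rw [closure_induced, mem_closure_iff]
  intro o ho hfo
  rw [isOpen_pi_iff] at ho
  obtain ⟨F, u, hu, hsub⟩ := ho _ hfo
  set L := F.sup wnorm with hL
  obtain ⟨K, hKn, B, h1, h2, h3, h4, h5, h6⟩ := key_D hx (DF (Bf hx) J (2 * L)) L
  refine ⟨_, hsub ?_, ⟨⟨K, hKn⟩, ⟨h4, h5, h6⟩, rfl⟩⟩
  intro w hw
  have hwL : wnorm w ≤ L := Finset.le_sup (f := wnorm) hw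
  have e : mgChi (⟨K, hKn⟩ : MarkedGroup n) w = mgChi (fJ hx J) w := by
    unfold mgChi
    rw [decide_eq_decide]
    constructor
    · intro h
      refine ND_local x0 x1 _ _ w (Finset.mem_coe.2 (Finset.mem_insert_self _ _)) ?_ (h1 h)
      intro d hd
      rcases DJ_cases (Bf hx) J (2 * L) d hd with h | ⟨j, hj, hij, rfl⟩
      · exact Or.inl (Finset.mem_coe.2 h)
      · right
        have := pp_ge (Bf hx) j
        simp only [pM]
        omega
    · intro h
      exact h2 w hwL (ND_anti x0 x1 (DF_sub' (Bf hx) J (2 * L)) h)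
  rw [e]
  exact (hu w hw).2

theorem fJ_not_le {x0 x1 : Fin n} (hx : x0 ≠ x1) {I J : Set ℕ}
    (hIJ : ∀ c, ∃ a ∈ I, a ∉ J ∧ c ≤ a) : ¬ precIs (fJ hx I) (fJ hx J) := by
  rintro ⟨C, hC, hspec⟩
  obtain ⟨i, hiI, hiJ, hCi⟩ := hIJ C
  have hI : (ND x0 x1 (DJ (Bf hx) I)).Normal := ND_normal _ _ _
  have hJ : (ND x0 x1 (DJ (Bf hx) J)).Normal := ND_normal _ _ _
  set p := pp (Bf hx) i with hp
  set k := 8 * p + 16 with hk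
  set m := mi (Bf hx) i with hm
  have hp3 : 3 ≤ p := by have := pp_ge (Bf hx) i; omega
  have hkm : k ≤ m := mi_ge (Bf hx) i
  have hikm : i * k ≤ m := mi_ge' (Bf hx) i
  have hCk : C * k ≤ i * k := Nat.mul_le_mul_right _ hCi
  -- upper bound
  have hup : ∀ N, isoSpec (QuotientGroup.mk' (ND x0 x1 (DJ (Bf hx) J))) (C * k) m N ≤ N := by
    intro N
    have hB : Bf hx (DF (Bf hx) J i) (i * k) ≤ m := mi_ge_sup (Bf hx) i _ (DF_sub _ _ _)
    refine isoSpec_upper hx _ (DF (Bf hx) J i) (i * k) m (C * k) N hCk hB (DF_sub' _ _ _) ?_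
    intro d hd
    rcases DJ_cases (Bf hx) J i d hd with h | ⟨j, hj, hij, rfl⟩
    · exact Or.inl h
    · right
      have hij' : i < j := lt_of_le_of_ne hij (by rintro rfl; exact hiJ hj)
      have := pp_gap (Bf hx) hij'
      simp only [pM]
      omega
  -- lower bound
  have hlow : ∀ q : ℕ, q * q ≤ isoSpec (QuotientGroup.mk' (ND x0 x1 (DJ (Bf hx) I))) k (C * m) (q * k)
      * (C * m) ^ 2 := by
    intro q
    refine isoSpec_lower hx _ p ((i + 1) * m) hp3 ?_ ?_ (C * m) ?_ ?_ q
    · intro w hw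
      exact (mem_ND _ _ _ _).1 hw (pM (Bf hx) i) (Or.inr ⟨i, hiI, rfl⟩)
    · rw [mem_ND]
      intro d hd
      rcases hd with rfl | ⟨j, hj, rfl⟩
      · exact rho_comm hx _ p hp3 (by simp) (by simp) (by simp; omega)
      · have h3 := pp_ge (Bf hx) j
        have h4 := mi_ge (Bf hx) j
        have hcase : j = i ∨ pp (Bf hx) j + 2 ≤ p ∨ p + 2 ≤ pp (Bf hx) j := by
          rcases lt_trichotomy j i with h | h | h
          · have := pp_gap (Bf hx) h; right; left; omega
          · exact Or.inl h
          · have := pp_gap (Bf hx) h; right; right; omega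
        have hcase' : pp (Bf hx) j = p ∨ pp (Bf hx) j + 2 ≤ p ∨ p + 2 ≤ pp (Bf hx) j :=
          hcase.imp (fun h => by rw [h]) id
        exact rho_comm hx _ p hp3 (by simp only [pM]; omega) (by simp only [pM]; omega)
          (by simp only [pM]; omega)
    · nlinarith
    · nlinarith
  have hmpos : 0 < m := by omega
  set q := (C * m) ^ 2 * (C * C * k + C * k + C) + 1 with hq
  have hqpos : 0 < q := Nat.succ_pos _
  have hs := hspec k m (q * k) (by omega) hmpos (Nat.mul_pos hqpos (by omega)) (hCk.trans hikm)
  change (isoSpec (QuotientGroup.mk' (ND x0 x1 (DJ (Bf hx) I))) k (C * m) (q * k) : ℝ) ≤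
    C * (isoSpec (QuotientGroup.mk' (ND x0 x1 (DJ (Bf hx) J))) (C * k) m (C * (q * k)) : ℝ)
      + C * ((q * k : ℕ) : ℝ) / m + C at hs
  have h1 := hup (C * (q * k))
  have h2 := hlow q
  have h1' : (isoSpec (QuotientGroup.mk' (ND x0 x1 (DJ (Bf hx) J))) (C * k) m (C * (q * k)) : ℝ) ≤
    C * (q * k) := by exact_mod_cast h1
  have h3 : (C * ((q * k : ℕ) : ℝ) / m) ≤ C * (q * k) := by
    have : (1 : ℝ) ≤ m := by exact_mod_cast hmpos
    push_cast
    exact div_le_self (by positivity) this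
  have h4 : (isoSpec (QuotientGroup.mk' (ND x0 x1 (DJ (Bf hx) I))) k (C * m) (q * k) : ℝ) ≤
      ((C * (C * (q * k)) + C * (q * k) + C : ℕ) : ℝ) := by
    push_cast
    have : (C : ℝ) * (isoSpec (QuotientGroup.mk' (ND x0 x1 (DJ (Bf hx) J))) (C * k) m (C * (q * k)) : ℝ)
      ≤ C * (C * (q * k)) := by gcongr
    linarith
  have h5 : isoSpec (QuotientGroup.mk' (ND x0 x1 (DJ (Bf hx) I))) k (C * m) (q * k) ≤
      C * (C * (q * k)) + C * (q * k) + C := by exact_mod_cast h4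
  have h6 : C * (C * (q * k)) + C * (q * k) + C ≤ (C * C * k + C * k + C) * q := by
    have : C ≤ C * q := Nat.le_mul_of_pos_right _ hqpos
    calc _ ≤ C * (C * (q * k)) + C * (q * k) + C * q := by omega
      _ = _ := by ring
  have h7 : q * q ≤ ((C * m) ^ 2 * (C * C * k + C * k + C)) * q := by
    calc q * q ≤ _ := h2
      _ ≤ ((C * C * k + C * k + C) * q) * (C * m) ^ 2 := Nat.mul_le_mul_right _ (h5.trans h6)
      _ = _ := by ring
  have h8 := Nat.le_of_mul_le_mul_right h7 hqpos
  omega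

theorem precIs_refl (H : MarkedGroup n) : precIs H H := by
  refine ⟨1, one_pos, ?_⟩
  intro k m n _ _ _ _
  simp only [one_mul, Nat.cast_one]
  have : (0 : ℝ) ≤ n / m := by positivity
  linarith

end final

/-- For every `n ≥ 2`, the closure `ℋ̄_n` of `ℋ_n` in `𝒢_n` contains
continuum many pairwise `≼_is`-incomparable elements. -/
theorem continuum_antichain_in_closure_of_hyperbolic (n : ℕ) (hn : 2 ≤ n) :
    ∃ f : Set ℕ → MarkedGroup n, Injective f ∧
      (∀ I : Set ℕ, f I ∈ closure (Hset n)) ∧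
      ∀ I J : Set ℕ, I ≠ J → ¬ precIs (f I) (f J) ∧ ¬ precIs (f J) (f I) := by
  have hx : (⟨0, by omega⟩ : Fin n) ≠ ⟨1, by omega⟩ := by simp
  have hmain : ∀ I J : Set ℕ, I ≠ J → ¬ precIs (fJ hx (code I)) (fJ hx (code J)) :=
    fun I J h => fJ_not_le hx (code_diff h)
  refine ⟨fun I => fJ hx (code I), ?_, fun I => fJ_closure hx _, fun I J h =>
    ⟨hmain I J h, hmain J I h.symm⟩⟩
  intro I J h
  by_contra hne
  apply hmain I J hne
  simp only at h
  rw [h]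
  exact precIs_refl _

end IsoSpecPaper
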